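/- arXiv:1904.05147 — 3 statements merged into one kernel-verified Lean document; each statement's English description precedes it below -/
import Mathlib

section
/- Existence for the DPP: for every bounded Borel function F : Γ_ε → ℝ there exists a bounded Borel function u : Ω_ε → ℝ such that u = F on Γ_ε and u satisfies the DPP at every point of Ω. -/
open MeasureTheory Metric Set

/-!
Value iteration: start from the least function with the prescribed exterior values and bounded by
`M`, and apply repeatedly the right-hand side of the dynamic programming principle. By monotonicity
the iterates `U k` increase to a limit `u`. Infima over balls do not commute with increasing
pointwise limits, so uniform convergence is needed. The midrange part multiplies the uniform
distance `δ k = sup (u - U k)` by at most `a < 1`, while the averaging part contributes at most a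
multiple of `∫ (u - U k)`, which tends to `0` by dominated convergence. Hence
`δ (k + 1) ≤ a * δ k + o(1)`, which forces `δ k → 0`, and `u` is a fixed point.
-/

open Filter Topology Function

section Convergence

lemma monotone_iterate_of_isLeast {α : Type*} [Preorder α] {A : Set α} {f : α → α} {a : α}
    (hmaps : MapsTo f A A) (hmono : MonotoneOn f A) (ha : IsLeast A a) :
    Monotone fun k => f^[k] a := by
  refine monotone_nat_of_le_succ fun k => ?_
  induction k with
  | zero => exact ha.2 (hmaps ha.1)
  | succ k ih =>
    simp only [iterate_succ_apply'] at ih ⊢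
    exact hmono (hmaps.iterate k ha.1) (hmaps (hmaps.iterate k ha.1)) ih

lemma tendsto_zero_of_antitone_of_le_mul_add {δ r : ℕ → ℝ} {a : ℝ} (hδ : Antitone δ)
    (hδ₀ : ∀ k, 0 ≤ δ k) (ha : a < 1) (hr : Tendsto r atTop (𝓝 0))
    (hstep : ∀ k, δ (k + 1) ≤ a * δ k + r k) : Tendsto δ atTop (𝓝 0) := by
  have hlim : Tendsto δ atTop (𝓝 (⨅ k, δ k)) :=
    tendsto_atTop_ciInf hδ ⟨0, forall_mem_range.2 hδ₀⟩
  have hle : ⨅ k, δ k ≤ a * (⨅ k, δ k) + 0 :=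
    le_of_tendsto_of_tendsto' ((tendsto_add_atTop_iff_nat 1).2 hlim)
      ((hlim.const_mul a).add hr) hstep
  have hzero : ⨅ k, δ k = 0 := le_antisymm (by nlinarith) (le_ciInf hδ₀)
  rwa [hzero] at hlim

end Convergence

section SetAverage

variable {X : Type*} [MeasurableSpace X] {μ : Measure X} {A : Set X} {f v w : X → ℝ} {c V M : ℝ}

lemma abs_setAverage_le (hM : 0 ≤ M) (hf : ∀ x ∈ A, |f x| ≤ M) :
    |⨍ x in A, f x ∂μ| ≤ M := by
  rcases eq_or_ne (μ.real A) 0 with h₀ | h₀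
  · simpa [setAverage_eq, h₀] using hM
  have hpos : 0 < μ.real A := lt_of_le_of_ne measureReal_nonneg h₀.symm
  rw [setAverage_eq, smul_eq_mul, abs_mul, abs_inv, abs_of_pos hpos, inv_mul_le_iff₀ hpos,
    mul_comm]
  exact norm_setIntegral_le_of_norm_le_const (f := f) (ENNReal.toReal_pos_iff.1 hpos).2 hf

lemma setAverage_le_setAverage_add_const (hA : MeasurableSet A) (hμA : 0 < μ.real A)
    (hv : IntegrableOn v A μ) (hw : IntegrableOn w A μ) (h : ∀ x ∈ A, w x ≤ v x + c) :
    ⨍ x in A, w x ∂μ ≤ (⨍ x in A, v x ∂μ) + c := by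
  have hc : IntegrableOn (fun _ => c) A μ :=
    integrableOn_const (ENNReal.toReal_pos_iff.1 hμA).2.ne
  rw [setAverage_eq, setAverage_eq, smul_eq_mul, smul_eq_mul, inv_mul_le_iff₀ hμA, mul_add,
    mul_inv_cancel_left₀ hμA.ne']
  calc ∫ x in A, w x ∂μ ≤ ∫ x in A, (v x + c) ∂μ := setIntegral_mono_on hw (hv.add hc) hA h
    _ = (∫ x in A, v x ∂μ) + μ.real A * c := by
      rw [integral_add hv hc, setIntegral_const, smul_eq_mul]

lemma setAverage_sub (hw : IntegrableOn w A μ) (hv : IntegrableOn v A μ) :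
    ⨍ x in A, (w x - v x) ∂μ = (⨍ x in A, w x ∂μ) - ⨍ x in A, v x ∂μ := by
  simp only [setAverage_eq, integral_sub hw hv, smul_sub]

lemma setAverage_le_inv_mul_integral (hV : 0 < V) (hVA : V ≤ μ.real A) (hf : Integrable f μ)
    (hf₀ : 0 ≤ f) : ⨍ x in A, f x ∂μ ≤ V⁻¹ * ∫ x, f x ∂μ := by
  rw [setAverage_eq, smul_eq_mul]
  gcongr
  · exact integral_nonneg hf₀
  · exact .of_forall hf₀
  · exact Measure.restrict_le_self

end SetAverage

section Midrange

variable {X : Type*} {u v w : X → ℝ} {A : Set X} {c M : ℝ}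

/-- The midrange of `u` over `A`, the midpoint between its supremum and its infimum there. Both are
read as real numbers, hence are `0` on the empty set. -/
noncomputable def midrange (u : X → ℝ) (A : Set X) : ℝ :=
  (sSup (u '' A) + sInf (u '' A)) / 2

lemma sInf_image_eq_neg_sSup_image_neg (u : X → ℝ) (A : Set X) :
    sInf (u '' A) = -sSup ((-u) '' A) := by
  rw [Real.sInf_def, ← image_neg_eq_neg, image_image]
  rfl

lemma abs_sSup_image_le (hM : 0 ≤ M) (hu : ∀ x ∈ A, |u x| ≤ M) : |sSup (u '' A)| ≤ M := by
  rcases A.eq_empty_or_nonempty with rfl | ⟨y, hy⟩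
  · simpa using hM
  have hle : ∀ z ∈ u '' A, z ≤ M := forall_mem_image.2 fun x hx => (abs_le.1 (hu x hx)).2
  exact abs_le.2 ⟨(abs_le.1 (hu y hy)).1.trans (le_csSup ⟨M, hle⟩ (mem_image_of_mem u hy)),
    csSup_le ⟨_, mem_image_of_mem u hy⟩ hle⟩

lemma abs_midrange_le (hM : 0 ≤ M) (hu : ∀ x ∈ A, |u x| ≤ M) : |midrange u A| ≤ M := by
  have hsup : |sSup (u '' A)| ≤ M := abs_sSup_image_le hM hu
  have hinf : |sInf (u '' A)| ≤ M := by
    rw [sInf_image_eq_neg_sSup_image_neg, abs_neg]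
    exact abs_sSup_image_le hM fun x hx => (abs_neg (u x)).trans_le (hu x hx)
  rw [midrange, abs_div, abs_two, div_le_iff₀ two_pos]
  linarith [abs_add_le (sSup (u '' A)) (sInf (u '' A))]

lemma bddAbove_range_of_abs_le (hu : ∀ x, |u x| ≤ M) : BddAbove (range u) :=
  ⟨M, forall_mem_range.2 fun x => (abs_le.1 (hu x)).2⟩

lemma bddBelow_range_of_abs_le (hu : ∀ x, |u x| ≤ M) : BddBelow (range u) :=
  ⟨-M, forall_mem_range.2 fun x => (abs_le.1 (hu x)).1⟩

lemma midrange_le_midrange_add_const (hA : A.Nonempty) (hv : BddAbove (v '' A))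
    (hw : BddBelow (w '' A)) (h : ∀ x ∈ A, w x ≤ v x + c) :
    midrange w A ≤ midrange v A + c := by
  have hsup : sSup (w '' A) ≤ sSup (v '' A) + c :=
    csSup_le (hA.image w) <| forall_mem_image.2 fun x hx =>
      (h x hx).trans <| add_le_add_left (le_csSup hv (mem_image_of_mem v hx)) c
  have hinf : sInf (w '' A) - c ≤ sInf (v '' A) :=
    le_csInf (hA.image v) <| forall_mem_image.2 fun x hx =>
      sub_le_iff_le_add.2 <| (csInf_le hw (mem_image_of_mem w hx)).trans (h x hx)
  unfold midrange
  linarith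

end Midrange

section Measurability

variable {X : Type*} [PseudoMetricSpace X] [MeasurableSpace X] [OpensMeasurableSpace X] {u : X → ℝ}

lemma measurable_sSup_image_ball (hu : BddAbove (range u)) :
    Measurable fun q : X × ℝ => sSup (u '' ball q.1 q.2) := by
  refine measurable_of_Ioi fun c => ?_
  have hlevel : (fun q : X × ℝ => sSup (u '' ball q.1 q.2)) ⁻¹' Ioi c =
      (⋃ z ∈ {z | c < u z}, {q : X × ℝ | dist z q.1 < q.2}) ∪
        ({q : X × ℝ | q.2 ≤ 0} ∩ {_q | c < 0}) := by
    ext ⟨x, t⟩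
    simp only [mem_preimage, mem_Ioi, mem_union, mem_iUnion, mem_ofPred_eq, mem_inter_iff,
      exists_prop]
    rcases le_or_gt t 0 with ht | ht
    · have hdist : ∀ z, ¬ dist z x < t := fun z => not_lt.2 (ht.trans dist_nonneg)
      simp [ball_eq_empty.2 ht, ht, hdist]
    · rw [lt_csSup_iff (hu.mono (image_subset_range _ _)) ((nonempty_ball.2 ht).image u)]
      simp only [exists_mem_image, mem_ball, not_le.2 ht, false_and, or_false]
      exact exists_congr fun z => and_comm
  rw [hlevel]
  refine MeasurableSet.union (IsOpen.measurableSet ?_) (MeasurableSet.inter ?_ (.const _))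
  · exact isOpen_biUnion fun z _ => isOpen_lt (by fun_prop) (by fun_prop)
  · exact (isClosed_le (by fun_prop) (by fun_prop)).measurableSet

lemma measurable_midrange_ball (hu : BddAbove (range u)) (hu' : BddBelow (range u)) :
    Measurable fun q : X × ℝ => midrange u (ball q.1 q.2) := by
  have hneg : BddAbove (range (-u)) := by
    rw [← neg_range']
    exact hu'.neg
  simp only [midrange, sInf_image_eq_neg_sSup_image_neg]
  exact ((measurable_sSup_image_ball hu).add (measurable_sSup_image_ball hneg).neg).div_const 2

lemma measurable_setAverage_ball [SecondCountableTopology X] (μ : Measure X) [SFinite μ]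
    (hu : Measurable u) (ε : ℝ) : Measurable fun x => ⨍ z in ball x ε, u z ∂μ := by
  have hs : MeasurableSet {q : X × X | dist q.2 q.1 < ε} :=
    (isOpen_lt (by fun_prop) (by fun_prop)).measurableSet
  have hvolume : Measurable fun x => μ.real (ball x ε) :=
    (measurable_measure_prodMk_left hs).ennreal_toReal
  have hintegral : Measurable fun x => ∫ z in ball x ε, u z ∂μ := by
    simp only [← integral_indicator measurableSet_ball]
    exact ((hu.comp measurable_snd).indicator hs).stronglyMeasurable.integral_prod_right'.measurable
  simp only [setAverage_eq]
  exact hvolume.inv.smul hintegral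

end Measurability

section DynamicProgramming

variable {X : Type*} [PseudoMetricSpace X] [MeasurableSpace X]

/-- The right-hand side of the dynamic programming principle: the mean over radii `t ∈ (0, ε]` of
the midrange of `u` over `B_t(x)`, weighted by `a`, plus the mean of `u` over `B_ε(x)`, weighted
by `b`. The paper's weights are `a = α` and `b = β`. -/
noncomputable def dppOperator (μ : Measure X) (a b ε : ℝ) (u : X → ℝ) (x : X) : ℝ :=
  a * (⨍ t in Ioc 0 ε, midrange u (ball x t)) + b * ⨍ z in ball x ε, u z ∂μ

variable {μ : Measure X} {a b c ε M : ℝ} {u v w : X → ℝ} {x : X}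

lemma dppOperator_eq_intervalIntegral (hε : 0 ≤ ε) :
    dppOperator μ a b ε u x =
      a / (2 * ε) * (∫ t in (0 : ℝ)..ε, (sSup (u '' ball x t) + sInf (u '' ball x t))) +
        b * ⨍ z in ball x ε, u z ∂μ := by
  simp only [dppOperator, midrange, setAverage_eq, Real.volume_real_Ioc_of_le hε, sub_zero,
    intervalIntegral.integral_of_le hε, integral_div, smul_eq_mul]
  ring

lemma abs_dppOperator_le (ha : 0 ≤ a) (hb : 0 ≤ b) (hab : a + b ≤ 1) (hu : ∀ x, |u x| ≤ M) :
    |dppOperator μ a b ε u x| ≤ M := by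
  have hM : 0 ≤ M := (abs_nonneg _).trans (hu x)
  have hmid : |⨍ t in Ioc 0 ε, midrange u (ball x t)| ≤ M :=
    abs_setAverage_le hM fun t _ => abs_midrange_le hM fun z _ => hu z
  have havg : |⨍ z in ball x ε, u z ∂μ| ≤ M := abs_setAverage_le hM fun z _ => hu z
  calc |dppOperator μ a b ε u x|
      ≤ a * |⨍ t in Ioc 0 ε, midrange u (ball x t)| + b * |⨍ z in ball x ε, u z ∂μ| := by
        refine (abs_add_le _ _).trans_eq ?_
        rw [abs_mul, abs_mul, abs_of_nonneg ha, abs_of_nonneg hb]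
    _ ≤ a * M + b * M := by gcongr
    _ ≤ M := by
        rw [← add_mul]
        exact mul_le_of_le_one_left hM hab

variable [OpensMeasurableSpace X]

lemma measurable_dppOperator [SecondCountableTopology X] [SFinite μ] (hum : Measurable u)
    (hu : ∀ x, |u x| ≤ M) : Measurable (dppOperator μ a b ε u) := by
  have hmid : Measurable fun x => ⨍ t in Ioc 0 ε, midrange u (ball x t) := by
    have hintegral : Measurable fun x => ∫ t in Ioc 0 ε, midrange u (ball x t) :=
      (measurable_midrange_ball (bddAbove_range_of_abs_le hu)
        (bddBelow_range_of_abs_le hu)).stronglyMeasurable.integral_prod_right'.measurable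
    simp only [setAverage_eq, smul_eq_mul]
    exact hintegral.const_mul _
  exact (hmid.const_mul a).add ((measurable_setAverage_ball μ hum ε).const_mul b)

lemma integrableOn_midrange_ball (hu : ∀ x, |u x| ≤ M) (x : X) (ε : ℝ) :
    IntegrableOn (fun t => midrange u (ball x t)) (Ioc 0 ε) := by
  have hM : 0 ≤ M := (abs_nonneg _).trans (hu x)
  refine Measure.integrableOn_of_bounded measure_Ioc_lt_top.ne ?_
    (.of_forall fun t => abs_midrange_le hM fun z _ => hu z)
  exact ((measurable_midrange_ball (bddAbove_range_of_abs_le hu)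
    (bddBelow_range_of_abs_le hu)).comp measurable_prodMk_left).aestronglyMeasurable

lemma dppOperator_le_add (ha : 0 ≤ a) (hε : 0 < ε) (hx : μ (ball x ε) ≠ ⊤)
    (hvm : Measurable v) (hv : ∀ x, |v x| ≤ M) (hwm : Measurable w) (hw : ∀ x, |w x| ≤ M)
    (h : ∀ x, w x ≤ v x + c) :
    dppOperator μ a b ε w x ≤
      dppOperator μ a b ε v x + (a * c + b * ⨍ z in ball x ε, (w z - v z) ∂μ) := by
  have hmid : ⨍ t in Ioc 0 ε, midrange w (ball x t) ≤
      (⨍ t in Ioc 0 ε, midrange v (ball x t)) + c := by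
    refine setAverage_le_setAverage_add_const measurableSet_Ioc
      (by simpa [Real.volume_real_Ioc_of_le hε.le] using hε)
      (integrableOn_midrange_ball hv x ε) (integrableOn_midrange_ball hw x ε) fun t ht => ?_
    exact midrange_le_midrange_add_const (nonempty_ball.2 ht.1)
      ((bddAbove_range_of_abs_le hv).mono (image_subset_range _ _))
      ((bddBelow_range_of_abs_le hw).mono (image_subset_range _ _)) fun z _ => h z
  have havg : ⨍ z in ball x ε, (w z - v z) ∂μ =
      (⨍ z in ball x ε, w z ∂μ) - ⨍ z in ball x ε, v z ∂μ :=
    setAverage_sub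
      (Measure.integrableOn_of_bounded hx hwm.aestronglyMeasurable (.of_forall hw))
      (Measure.integrableOn_of_bounded hx hvm.aestronglyMeasurable (.of_forall hv))
  rw [havg]
  unfold dppOperator
  linarith [mul_le_mul_of_nonneg_left hmid ha]

lemma dppOperator_mono (ha : 0 ≤ a) (hb : 0 ≤ b) (hε : 0 < ε) (hx : μ (ball x ε) ≠ ⊤)
    (hvm : Measurable v) (hv : ∀ x, |v x| ≤ M) (hwm : Measurable w) (hw : ∀ x, |w x| ≤ M)
    (h : v ≤ w) : dppOperator μ a b ε v x ≤ dppOperator μ a b ε w x := by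
  have hle := dppOperator_le_add (b := b) ha hε hx hwm hw hvm hv fun z =>
    (h z).trans_eq (add_zero _).symm
  have havg : ⨍ z in ball x ε, (v z - w z) ∂μ ≤ 0 :=
    integral_nonpos fun z => sub_nonpos.2 (h z)
  linarith [mul_nonpos_of_nonneg_of_nonpos hb havg]

end DynamicProgramming

section Admissible

variable {X : Type*} [MeasurableSpace X] {s : Set X} {g : X → ℝ} {M : ℝ}

/-- The Borel functions bounded by `M` with the prescribed values `g` outside `s`, among which
the solution is sought. -/
structure IsAdmissible (s : Set X) (g : X → ℝ) (M : ℝ) (u : X → ℝ) : Prop where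
  measurable : Measurable u
  abs_apply_le : ∀ x, |u x| ≤ M
  eqOn_compl : EqOn u g sᶜ

open Classical in
lemma isAdmissible_piecewise {f : X → ℝ} (hs : MeasurableSet s) (hfm : Measurable f)
    (hf : ∀ x ∈ s, |f x| ≤ M) (hgm : Measurable g) (hg : ∀ x ∉ s, |g x| ≤ M) :
    IsAdmissible s g M (s.piecewise f g) where
  measurable := hfm.piecewise hs hgm
  abs_apply_le x := by
    by_cases hx : x ∈ s
    · simpa only [piecewise_eq_of_mem s f g hx] using hf x hx
    · simpa only [piecewise_eq_of_notMem s f g hx] using hg x hx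
  eqOn_compl x hx := piecewise_eq_of_notMem s f g hx

open Classical in
lemma isLeast_isAdmissible (hs : MeasurableSet s) (hgm : Measurable g) (hg : ∀ x ∉ s, |g x| ≤ M)
    (hM : 0 ≤ M) :
    IsLeast {u | IsAdmissible s g M u} (s.piecewise (fun _ => -M) g) :=
  ⟨isAdmissible_piecewise hs measurable_const
      (fun _ _ => by rw [abs_neg, abs_of_nonneg hM]) hgm hg,
    fun _ hu => piecewise_le (fun x _ => (abs_le.1 (hu.abs_apply_le x)).1)
      fun _ hx => (hu.eqOn_compl hx).ge⟩

namespace IsAdmissible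

variable {u v w : X → ℝ} {U : ℕ → X → ℝ}

lemma sub_le (hu : IsAdmissible s g M u) (hv : IsAdmissible s g M v) (x : X) :
    u x - v x ≤ 2 * M := by
  linarith [(abs_le.1 (hu.abs_apply_le x)).2, (abs_le.1 (hv.abs_apply_le x)).1]

lemma abs_sub_le_indicator (hu : IsAdmissible s g M u) (hv : IsAdmissible s g M v) (x : X) :
    |u x - v x| ≤ s.indicator (fun _ => 2 * M) x := by
  by_cases hx : x ∈ s
  · rw [indicator_of_mem hx]
    exact abs_le.2 ⟨by linarith [hv.sub_le hu x], hu.sub_le hv x⟩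
  · rw [indicator_of_notMem hx, hu.eqOn_compl hx, hv.eqOn_compl hx, sub_self, abs_zero]

lemma of_tendsto (hU : ∀ k, IsAdmissible s g M (U k))
    (hlim : ∀ x, Tendsto (fun k => U k x) atTop (𝓝 (u x))) : IsAdmissible s g M u where
  measurable := measurable_of_tendsto_metrizable (fun k => (hU k).measurable)
    (tendsto_pi_nhds.2 hlim)
  abs_apply_le x := le_of_tendsto' (hlim x).abs fun k => (hU k).abs_apply_le x
  eqOn_compl x hx := tendsto_nhds_unique (hlim x) <| tendsto_const_nhds.congr fun k =>
    ((hU k).eqOn_compl hx).symm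

variable {μ : Measure X} {Φ : (X → ℝ) → X → ℝ} {u₀ : X → ℝ} {a K : ℝ}

lemma integrable_sub (hs : MeasurableSet s) (hμs : μ s ≠ ⊤) (hu : IsAdmissible s g M u)
    (hv : IsAdmissible s g M v) : Integrable (fun x => u x - v x) μ :=
  ((integrable_indicator_iff hs).2 (integrableOn_const hμs)).mono'
    (hu.measurable.sub hv.measurable).aestronglyMeasurable
    (.of_forall (hu.abs_sub_le_indicator hv))

lemma tendsto_integral_sub (hs : MeasurableSet s) (hμs : μ s ≠ ⊤)
    (hU : ∀ k, IsAdmissible s g M (U k)) (hu : IsAdmissible s g M u)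
    (hlim : ∀ x, Tendsto (fun k => U k x) atTop (𝓝 (u x))) :
    Tendsto (fun k => ∫ x, (u x - U k x) ∂μ) atTop (𝓝 0) := by
  have hdom : Integrable (s.indicator fun _ => 2 * M) μ :=
    (integrable_indicator_iff hs).2 (integrableOn_const hμs)
  simpa only [sub_self, integral_zero] using tendsto_integral_of_dominated_convergence
    (F := fun k x => u x - U k x) _
    (fun k => (hu.measurable.sub (hU k).measurable).aestronglyMeasurable) hdom
    (fun k => .of_forall (hu.abs_sub_le_indicator (hU k)))
    (.of_forall fun x => (hlim x).const_sub (u x))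

lemma exists_tendsto_of_monotone (hU : ∀ k, IsAdmissible s g M (U k)) (hmono : Monotone U) :
    ∃ u, IsAdmissible s g M u ∧ (∀ k, U k ≤ u) ∧
      ∀ x, Tendsto (fun k => U k x) atTop (𝓝 (u x)) := by
  have hbdd (x : X) : BddAbove (range fun k => U k x) :=
    ⟨M, forall_mem_range.2 fun k => (abs_le.1 ((hU k).abs_apply_le x)).2⟩
  have hlim (x : X) : Tendsto (fun k => U k x) atTop (𝓝 (⨆ k, U k x)) :=
    tendsto_atTop_ciSup (fun _ _ hij => hmono hij x) (hbdd x)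
  exact ⟨_, of_tendsto hU hlim, fun k x => le_ciSup (hbdd x) k, hlim⟩

lemma tendsto_iSup_sub {r : ℕ → ℝ} (hU : ∀ k, IsAdmissible s g M (U k))
    (hmono : Monotone U) (hu : IsAdmissible s g M u) (hUu : ∀ k, U k ≤ u) (ha : a < 1)
    (hr : Tendsto r atTop (𝓝 0))
    (hstep : ∀ k x, u x ≤ U (k + 1) x + (a * (⨆ y, (u y - U k y)) + r k)) :
    Tendsto (fun k => ⨆ x, (u x - U k x)) atTop (𝓝 0) := by
  rcases isEmpty_or_nonempty X with hX | hX
  · simp only [Real.iSup_of_isEmpty, tendsto_const_nhds]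
  have hbdd (k : ℕ) : BddAbove (range fun x => u x - U k x) :=
    ⟨2 * M, forall_mem_range.2 (hu.sub_le (hU k))⟩
  refine tendsto_zero_of_antitone_of_le_mul_add (fun i j hij => ?_) (fun k => ?_) ha hr
    fun k => ciSup_le fun x => sub_le_iff_le_add'.2 (hstep k x)
  · exact ciSup_mono (hbdd i) fun x => sub_le_sub_left (hmono hij x) (u x)
  · exact Real.iSup_nonneg fun x => sub_nonneg.2 (hUu k x)

theorem exists_isFixedPt (hs : MeasurableSet s) (hμs : μ s ≠ ⊤) (ha : a < 1)
    (hbot : IsLeast {u | IsAdmissible s g M u} u₀)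
    (hmaps : MapsTo Φ {u | IsAdmissible s g M u} {u | IsAdmissible s g M u})
    (hmono : MonotoneOn Φ {u | IsAdmissible s g M u})
    (hcontr : ∀ {v w c}, IsAdmissible s g M v → IsAdmissible s g M w → v ≤ w →
      (∀ x, w x ≤ v x + c) → ∀ x, Φ w x ≤ Φ v x + (a * c + K * ∫ z, (w z - v z) ∂μ)) :
    ∃ u, IsAdmissible s g M u ∧ IsFixedPt Φ u := by
  set U : ℕ → X → ℝ := fun k => Φ^[k] u₀
  have hUsucc (k : ℕ) : U (k + 1) = Φ (U k) := iterate_succ_apply' Φ k u₀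
  have hU (k : ℕ) : IsAdmissible s g M (U k) := hmaps.iterate k hbot.1
  have hUmono : Monotone U := monotone_iterate_of_isLeast hmaps hmono hbot
  obtain ⟨u, hu, hUu, hlim⟩ := exists_tendsto_of_monotone hU hUmono
  have hsub : u ≤ Φ u := fun x => le_of_tendsto' ((tendsto_add_atTop_iff_nat 1).2 (hlim x))
    fun k => by rw [hUsucc]; exact hmono (hU k) hu (hUu k) x
  set δ : ℕ → ℝ := fun k => ⨆ x, (u x - U k x)
  set r : ℕ → ℝ := fun k => K * ∫ z, (u z - U k z) ∂μ
  have hr : Tendsto r atTop (𝓝 0) := by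
    simpa only [mul_zero] using (tendsto_integral_sub hs hμs hU hu hlim).const_mul K
  have hsuper (k : ℕ) (x : X) : Φ u x ≤ U (k + 1) x + (a * δ k + r k) := by
    rw [hUsucc]
    refine hcontr (hU k) hu (hUu k) (fun y => sub_le_iff_le_add'.1 ?_) x
    exact le_ciSup ⟨2 * M, forall_mem_range.2 (hu.sub_le (hU k))⟩ y
  have hδ : Tendsto δ atTop (𝓝 0) := tendsto_iSup_sub hU hUmono hu hUu ha hr fun k x =>
    (hsub x).trans (hsuper k x)
  refine ⟨u, hu, le_antisymm (fun x => ?_) hsub⟩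
  have herr : Tendsto (fun k => u x + (a * δ k + r k)) atTop (𝓝 (u x)) := by
    simpa only [mul_zero, add_zero] using ((hδ.const_mul a).add hr).const_add (u x)
  exact ge_of_tendsto' herr fun k =>
    (hsuper k x).trans (add_le_add_left (hUu (k + 1) x) _)

end IsAdmissible

end Admissible

section Existence

variable {X : Type*} [PseudoMetricSpace X] [MeasurableSpace X] {μ : Measure X} {s : Set X}
  {g v w : X → ℝ} {a b c ε M V : ℝ}

open Classical in
/-- One step of value iteration: the dynamic programming operator inside `s`, the prescribed
values `g` outside. -/
noncomputable def dppStep (μ : Measure X) (a b ε : ℝ) (s : Set X) (g u : X → ℝ) : X → ℝ :=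
  s.piecewise (dppOperator μ a b ε u) g

lemma dppStep_of_mem {x : X} (hx : x ∈ s) :
    dppStep μ a b ε s g v x = dppOperator μ a b ε v x := by
  simp [dppStep, hx]

lemma dppStep_of_notMem {x : X} (hx : x ∉ s) : dppStep μ a b ε s g v x = g x := by
  simp [dppStep, hx]

variable [OpensMeasurableSpace X]

lemma dppStep_mono (ha : 0 ≤ a) (hb : 0 ≤ b) (hε : 0 < ε) (hball : ∀ x ∈ s, μ (ball x ε) ≠ ⊤)
    (hv : IsAdmissible s g M v) (hw : IsAdmissible s g M w) (hvw : v ≤ w) :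
    dppStep μ a b ε s g v ≤ dppStep μ a b ε s g w := fun x => by
  by_cases hx : x ∈ s
  · rw [dppStep_of_mem hx, dppStep_of_mem hx]
    exact dppOperator_mono ha hb hε (hball x hx) hv.measurable hv.abs_apply_le hw.measurable
      hw.abs_apply_le hvw
  · rw [dppStep_of_notMem hx, dppStep_of_notMem hx]

lemma dppStep_le_add (ha : 0 ≤ a) (hb : 0 ≤ b) (hε : 0 < ε) (hs : MeasurableSet s)
    (hμs : μ s ≠ ⊤) (hV : 0 < V) (hball : ∀ x ∈ s, V ≤ μ.real (ball x ε))
    (hv : IsAdmissible s g M v) (hw : IsAdmissible s g M w) (hvw : v ≤ w)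
    (h : ∀ x, w x ≤ v x + c) (x : X) :
    dppStep μ a b ε s g w x ≤
      dppStep μ a b ε s g v x + (a * c + b * V⁻¹ * ∫ z, (w z - v z) ∂μ) := by
  have hsub : 0 ≤ fun z => w z - v z := fun z => sub_nonneg.2 (hvw z)
  by_cases hx : x ∈ s
  · rw [dppStep_of_mem hx, dppStep_of_mem hx]
    have hfinite : μ (ball x ε) ≠ ⊤ :=
      (ENNReal.toReal_pos_iff.1 (hV.trans_le (hball x hx))).2.ne
    refine (dppOperator_le_add ha hε hfinite hv.measurable hv.abs_apply_le hw.measurable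
      hw.abs_apply_le h).trans ?_
    rw [mul_assoc b]
    gcongr
    exact setAverage_le_inv_mul_integral hV (hball x hx) (hw.integrable_sub hs hμs hv) hsub
  · rw [dppStep_of_notMem hx, dppStep_of_notMem hx, le_add_iff_nonneg_right]
    have hc : 0 ≤ c := by linarith [hvw x, h x]
    have hint : 0 ≤ ∫ z, (w z - v z) ∂μ := integral_nonneg hsub
    positivity

variable [SecondCountableTopology X]

lemma isAdmissible_dppStep [SFinite μ] (ha : 0 ≤ a) (hb : 0 ≤ b) (hab : a + b ≤ 1)
    (hs : MeasurableSet s) (hgm : Measurable g) (hg : ∀ x ∉ s, |g x| ≤ M)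
    (hv : IsAdmissible s g M v) : IsAdmissible s g M (dppStep μ a b ε s g v) :=
  isAdmissible_piecewise hs (measurable_dppOperator hv.measurable hv.abs_apply_le)
    (fun _ _ => abs_dppOperator_le ha hb hab hv.abs_apply_le) hgm hg

theorem exists_isAdmissible_eq_dppOperator [SFinite μ] (ha : 0 ≤ a) (ha₁ : a < 1) (hb : 0 ≤ b)
    (hab : a + b ≤ 1) (hε : 0 < ε) (hs : MeasurableSet s) (hμs : μ s ≠ ⊤) (hV : 0 < V)
    (hball : ∀ x ∈ s, V ≤ μ.real (ball x ε)) (hgm : Measurable g) (hM : 0 ≤ M)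
    (hg : ∀ x ∉ s, |g x| ≤ M) :
    ∃ u, IsAdmissible s g M u ∧ ∀ x ∈ s, u x = dppOperator μ a b ε u x := by
  have hfinite : ∀ x ∈ s, μ (ball x ε) ≠ ⊤ := fun x hx =>
    (ENNReal.toReal_pos_iff.1 (hV.trans_le (hball x hx))).2.ne
  obtain ⟨u, hu, hfix⟩ := IsAdmissible.exists_isFixedPt (Φ := dppStep μ a b ε s g) hs hμs ha₁
    (isLeast_isAdmissible hs hgm hg hM)
    (fun _ hv => isAdmissible_dppStep ha hb hab hs hgm hg hv)
    (fun _ hv _ hw hvw => dppStep_mono ha hb hε hfinite hv hw hvw)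
    (dppStep_le_add ha hb hε hs hμs hV hball)
  exact ⟨u, hu, fun x hx => (congrFun hfix.eq x).symm.trans (dppStep_of_mem hx)⟩

theorem dpp_existence_general (μ : Measure X) [SFinite μ] (ha : 0 ≤ a) (ha₁ : a < 1) (hb : 0 ≤ b)
    (hab : a + b ≤ 1) (hε : 0 < ε) {Ω Γ : Set X} (hΩ : MeasurableSet Ω) (hμΩ : μ Ω ≠ ⊤)
    (hV : 0 < V) (hball : ∀ x ∈ Ω, V ≤ μ.real (ball x ε)) (hΓΩ : Disjoint Γ Ω) {F : X → ℝ}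
    (hFmeas : Measurable F) (hFbdd : ∃ M, ∀ x ∈ Γ, |F x| ≤ M) :
    ∃ u : X → ℝ, Measurable u ∧ (∃ M, ∀ x, |u x| ≤ M) ∧ (∀ x ∈ Γ, u x = F x) ∧
      ∀ x ∈ Ω, u x =
        a / (2 * ε) * (∫ t in (0 : ℝ)..ε, (sSup (u '' ball x t) + sInf (u '' ball x t))) +
          b * ⨍ z in ball x ε, u z ∂μ := by
  obtain ⟨M, hM⟩ := hFbdd
  have hle : -|M| ≤ |M| := neg_le_self (abs_nonneg M)
  obtain ⟨u, hu, hdpp⟩ := exists_isAdmissible_eq_dppOperator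
    (g := fun x => (projIcc (-|M|) |M| hle (F x) : ℝ)) ha ha₁ hb hab hε hΩ hμΩ hV hball
    (continuous_projIcc.measurable.comp hFmeas).subtype_val (abs_nonneg M)
    fun x _ => abs_le.2 (projIcc _ _ hle (F x)).2
  refine ⟨u, hu.measurable, ⟨_, hu.abs_apply_le⟩, fun x hx => ?_, fun x hx =>
    (hdpp x hx).trans (dppOperator_eq_intervalIntegral hε.le)⟩
  have hFx : F x ∈ Icc (-|M|) |M| := abs_le.1 ((hM x hx).trans (le_abs_self M))
  exact (hu.eqOn_compl (hΓΩ.notMem_of_mem_left hx)).trans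
    (congrArg Subtype.val (projIcc_of_mem hle hFx))

end Existence

/-- **Existence for the DPP.** For every bounded Borel function `F` on the boundary strip
`Γ_ε = {x ∉ Ω : dist(x, ∂Ω) ≤ ε}` there exists a bounded Borel function `u` on
`Ω_ε = Ω ∪ Γ_ε` with `u = F` on `Γ_ε` satisfying the dynamic programming principle
`u(x) = α/(2ε) ∫₀^ε (sup_{B_t(x)} u + inf_{B_t(x)} u) dt + β ⨍_{B_ε(x)} u` for all `x ∈ Ω`,
where `α = (p-2)/(n+p)` and `β = (n+2)/(n+p)`. -/
theorem dpp_existence (n : ℕ) (hn : 2 ≤ n) (p : ℝ) (hp : 2 < p)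
    (Ω : Set (EuclideanSpace ℝ (Fin n)))
    (hΩopen : IsOpen Ω) (hΩconn : IsConnected Ω) (hΩbdd : Bornology.IsBounded Ω)
    (ε : ℝ) (hε : ε ∈ Set.Ioo (0 : ℝ) 1)
    (F : EuclideanSpace ℝ (Fin n) → ℝ) (hFmeas : Measurable F)
    (hFbdd : ∃ M, ∀ x ∈ {x | x ∉ Ω ∧ Metric.infDist x (frontier Ω) ≤ ε}, |F x| ≤ M) :
    ∃ u : EuclideanSpace ℝ (Fin n) → ℝ,
      Measurable u ∧
      (∃ M, ∀ x ∈ Ω ∪ {x | x ∉ Ω ∧ Metric.infDist x (frontier Ω) ≤ ε}, |u x| ≤ M) ∧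
      (∀ x ∈ {x | x ∉ Ω ∧ Metric.infDist x (frontier Ω) ≤ ε}, u x = F x) ∧
      (∀ x ∈ Ω, u x =
        ((p - 2) / (n + p)) / (2 * ε) *
            (∫ t in (0 : ℝ)..ε, (sSup (u '' Metric.ball x t) + sInf (u '' Metric.ball x t)))
          + ((n + 2) / (n + p)) * ⨍ z in Metric.ball x ε, u z) := by
  have hnp : (0 : ℝ) < n + p := by positivity
  obtain ⟨u, hu, ⟨M, hM⟩, huF, hdpp⟩ := dpp_existence_general volume (a := (p - 2) / (n + p))
    (b := (n + 2) / (n + p)) (div_nonneg (by linarith) hnp.le) (by rw [div_lt_one hnp]; linarith)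
    (by positivity) (by field_simp; linarith) hε.1 hΩopen.measurableSet hΩbdd.measure_lt_top.ne
    (ENNReal.toReal_pos (measure_ball_pos volume 0 hε.1).ne' measure_ball_lt_top.ne)
    (fun x _ => (Measure.addHaar_real_ball_center volume x ε).ge)
    (disjoint_left.2 fun _ hx => hx.1) hFmeas hFbdd
  exact ⟨u, hu, ⟨M, fun x _ => hM x⟩, huF, hdpp⟩
end

section
/- Rough Lipschitz estimate (Lemma 3.1): for every p > 2, integer n ≥ 2, r > 0 and M ≥ 0 there exists a constant C > 0 (depending only on p, n, r and M) such that the following holds. Let ε ∈ (0,1) with ε < r, let F : Γ_ε → ℝ be bounded Borel with sup_{Γ_ε}|F| ≤ M, and let u be a bounded Borel function on Ω_ε satisfying the DPP at every point of Ω with u = F on Γ_ε. Then for every z₀ with B_{6r}(z₀) ⊂ Ω and all x, y ∈ B_r(z₀): |u(x) − u(y)| ≤ C|x − y| + Cε. -/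
/-!
The proof is a discrete form of the Ishii–Lions doubling method. The difference `u a - u b` is
compared with `K + A ω(σ)`, where `σ` is `|a - b| + 2ε` divided by a concave weight of the midpoint
that vanishes on `∂B_{4r}(z₀)`, and `ω(σ) = σ - σ^{3/2}`.

In the dynamic programming principle it suffices to answer every pair of moves in the two balls of
radius `t` by a second pair such that the average of `ω(σ)` drops. If the first pair changes the
distance nearly as much as possible, the answer is the opposite pair; otherwise the two points step
towards each other. Either way `σ` varies by the order of `τ`, the ratio of `t` to the weight, and
the strict concavity of `ω` at `σ = q²` yields a gain of order `τ²/q`. The averages over `ε`-balls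
are compared by parallel moves, which lose only the square of the ratio of `ε` to the weight.

Hence, for `q` small in terms of `α`, any valid `K > 0` can be lowered by the fixed amount
`A (ε/r)²`, until `K = 0`. For larger `σ` the bound is trivial once `A` is large, since `|u| ≤ M` by
the maximum principle. Finally `ω(σ) ≤ σ`, and the weight is at least `r/2` in `B_r(z₀)`.
-/

open MeasureTheory Metric Set

section TugIntegral

lemma sSup_image_neg {X : Type*} (u : X → ℝ) (s : Set X) : sSup ((-u) '' s) = -sInf (u '' s) := by
  rw [← Real.sSup_neg, ← image_neg_eq_neg, image_image]
  rfl

lemma sInf_image_neg {X : Type*} (u : X → ℝ) (s : Set X) : sInf ((-u) '' s) = -sSup (u '' s) := by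
  rw [← Real.sInf_neg, ← image_neg_eq_neg, image_image]
  rfl

lemma bddAbove_image_of_abs_le {X : Type*} {u : X → ℝ} {s : Set X} {M : ℝ}
    (hu : ∀ y ∈ s, |u y| ≤ M) : BddAbove (u '' s) :=
  ⟨M, forall_mem_image.2 fun y hy ↦ (abs_le.1 (hu y hy)).2⟩

lemma bddBelow_image_of_abs_le {X : Type*} {u : X → ℝ} {s : Set X} {M : ℝ}
    (hu : ∀ y ∈ s, |u y| ≤ M) : BddBelow (u '' s) :=
  ⟨-M, forall_mem_image.2 fun y hy ↦ (abs_le.1 (hu y hy)).1⟩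

lemma abs_sSup_image_le_s4 {X : Type*} {u : X → ℝ} {s : Set X} {M : ℝ} (hs : s.Nonempty)
    (hu : ∀ y ∈ s, |u y| ≤ M) : |sSup (u '' s)| ≤ M := by
  obtain ⟨y, hy⟩ := hs
  refine abs_le.2 ⟨(abs_le.1 (hu y hy)).1.trans ?_, ?_⟩
  · exact le_csSup (bddAbove_image_of_abs_le hu) (mem_image_of_mem u hy)
  · exact csSup_le ⟨_, mem_image_of_mem u hy⟩
      (forall_mem_image.2 fun y hy ↦ (abs_le.1 (hu y hy)).2)

lemma sSup_image_sub_sInf_image_le {X Y : Type*} {u : X → ℝ} {v : Y → ℝ} {s : Set X} {s' : Set Y}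
    {c : ℝ} (hs : s.Nonempty) (hs' : s'.Nonempty) (h : ∀ a ∈ s, ∀ b ∈ s', u a - v b ≤ c) :
    sSup (u '' s) - sInf (v '' s') ≤ c := by
  rw [sub_le_iff_le_add]
  refine csSup_le (hs.image u) (forall_mem_image.2 fun a ha ↦ ?_)
  rw [← sub_le_iff_le_add']
  refine le_csInf (hs'.image v) (forall_mem_image.2 fun b hb ↦ ?_)
  linarith [h a ha b hb]

variable {E : Type*} [PseudoMetricSpace E] {u v : E → ℝ} {x z : E} {ε M M' : ℝ}

/-- The tug-of-war term `∫₀^ε (sup_{B_t(x)} u + inf_{B_t(x)} u) dt` of the dynamic programming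
principle. -/
noncomputable def tugIntegral (ε : ℝ) (u : E → ℝ) (x : E) : ℝ :=
  ∫ t in (0 : ℝ)..ε, (sSup (u '' ball x t) + sInf (u '' ball x t))

lemma tugIntegral_neg (ε : ℝ) (u : E → ℝ) (x : E) :
    tugIntegral ε (-u) x = -tugIntegral ε u x := by
  simp only [tugIntegral, sSup_image_neg, sInf_image_neg, ← intervalIntegral.integral_neg,
    neg_add_rev]

lemma intervalIntegrable_sSup_image_ball (hε : 0 ≤ ε) (hu : ∀ y ∈ ball x ε, |u y| ≤ M) :
    IntervalIntegrable (fun t ↦ sSup (u '' ball x t)) volume 0 ε := by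
  have hu' : ∀ t ∈ Ioc 0 ε, ∀ y ∈ ball x t, |u y| ≤ M := fun t ht y hy ↦
    hu y (ball_subset_ball ht.2 hy)
  have hmono : MonotoneOn (fun t ↦ sSup (u '' ball x t)) (Ioc 0 ε) := fun s hs t ht hst ↦
    csSup_le_csSup (bddAbove_image_of_abs_le (hu' t ht)) ((nonempty_ball.2 hs.1).image u)
      (image_mono (ball_subset_ball hst))
  rw [intervalIntegrable_iff_integrableOn_Ioc_of_le hε]
  exact Integrable.of_bound
    (aemeasurable_restrict_of_monotoneOn measurableSet_Ioc hmono).aestronglyMeasurable M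
    (ae_restrict_of_forall_mem measurableSet_Ioc fun t ht ↦
      abs_sSup_image_le_s4 (nonempty_ball.2 ht.1) (hu' t ht))

lemma intervalIntegrable_sInf_image_ball (hε : 0 ≤ ε) (hu : ∀ y ∈ ball x ε, |u y| ≤ M) :
    IntervalIntegrable (fun t ↦ sInf (u '' ball x t)) volume 0 ε := by
  have h := (intervalIntegrable_sSup_image_ball (u := -u) hε
    fun y hy ↦ (abs_neg (u y)).trans_le (hu y hy)).neg
  exact h.congr fun t _ ↦ by rw [Pi.neg_apply, sSup_image_neg, neg_neg]

lemma sSup_add_sInf_sub_le_of_forall_response {t : ℝ} {G : ℝ → ℝ} (ht : 0 < t)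
    (hu : ∀ y ∈ ball x t, |u y| ≤ M) (hv : ∀ y ∈ ball z t, |v y| ≤ M') (hG : ContinuousAt G t)
    (h : ∀ s ∈ Ioo 0 t, ∀ a ∈ closedBall x s, ∀ b ∈ closedBall z s,
      ∃ a' ∈ closedBall x s, ∃ b' ∈ closedBall z s, u a - v b + (u a' - v b') ≤ G s) :
    sSup (u '' ball x t) + sInf (u '' ball x t) - (sSup (v '' ball z t) + sInf (v '' ball z t))
      ≤ G t := by
  suffices hsup : sSup (u '' ball x t) - sInf (v '' ball z t)
      ≤ G t - (sInf (u '' ball x t) - sSup (v '' ball z t)) by linarith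
  refine sSup_image_sub_sInf_image_le (nonempty_ball.2 ht) (nonempty_ball.2 ht)
    fun a ha b hb ↦ le_sub_iff_add_le.2 ?_
  refine ge_of_tendsto (hG.tendsto.mono_left (nhdsWithin_le_nhds (s := Iio t))) ?_
  filter_upwards [Ioo_mem_nhdsLT ht, Ioo_mem_nhdsLT (mem_ball.1 ha),
    Ioo_mem_nhdsLT (mem_ball.1 hb)] with s hs has hbs
  obtain ⟨a', ha', b', hb', hab⟩ := h s hs a has.1.le b hbs.1.le
  have hinf : sInf (u '' ball x t) ≤ u a' :=
    csInf_le (bddBelow_image_of_abs_le hu) (mem_image_of_mem u (closedBall_subset_ball hs.2 ha'))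
  have hsup : v b' ≤ sSup (v '' ball z t) :=
    le_csSup (bddAbove_image_of_abs_le hv) (mem_image_of_mem v (closedBall_subset_ball hs.2 hb'))
  linarith

/-- The moves range over closed balls because `G` is continuous: a response of length exactly `t`
can be approximated from inside the open ball. -/
lemma tugIntegral_sub_le_of_forall_response {G : ℝ → ℝ} (hε : 0 ≤ ε)
    (hu : ∀ y ∈ ball x ε, |u y| ≤ M) (hv : ∀ y ∈ ball z ε, |v y| ≤ M') (hG : Continuous G)
    (h : ∀ t ∈ Ioo 0 ε, ∀ a ∈ closedBall x t, ∀ b ∈ closedBall z t,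
      ∃ a' ∈ closedBall x t, ∃ b' ∈ closedBall z t, u a - v b + (u a' - v b') ≤ G t) :
    tugIntegral ε u x - tugIntegral ε v z ≤ ∫ t in (0 : ℝ)..ε, G t := by
  have hui := (intervalIntegrable_sSup_image_ball hε hu).add
    (intervalIntegrable_sInf_image_ball hε hu)
  have hvi := (intervalIntegrable_sSup_image_ball hε hv).add
    (intervalIntegrable_sInf_image_ball hε hv)
  rw [tugIntegral, tugIntegral, ← intervalIntegral.integral_sub hui hvi]
  refine intervalIntegral.integral_mono_on_of_le_Ioo hε (hui.sub hvi)
    (hG.intervalIntegrable _ _) fun t ht ↦ ?_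
  exact sSup_add_sInf_sub_le_of_forall_response ht.1
    (fun y hy ↦ hu y (ball_subset_ball ht.2.le hy)) (fun y hy ↦ hv y (ball_subset_ball ht.2.le hy))
    hG.continuousAt fun s hs ↦ h s ⟨hs.1, hs.2.trans ht.2⟩

end TugIntegral

section Average

variable {E : Type*} [NormedAddCommGroup E] [MeasurableSpace E] [BorelSpace E]
  (μ : Measure E) [μ.IsAddHaarMeasure]

lemma setAverage_ball_eq_setAverage_ball_zero (u : E → ℝ) (x : E) (ε : ℝ) :
    ⨍ y in ball x ε, u y ∂μ = ⨍ h in ball (0 : E) ε, u (x + h) ∂μ := by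
  rw [setAverage_eq, setAverage_eq, measureReal_def, measureReal_def,
    Measure.addHaar_ball_center μ x ε,
    ← (measurePreserving_add_left μ x).setIntegral_preimage_emb
      (measurableEmbedding_addLeft x) u (ball x ε)]
  simp

variable [ProperSpace E] {u v g : E → ℝ} {x z : E} {ε M M' c : ℝ}

variable {μ} in
lemma integrableOn_ball_of_abs_le (hu : Measurable u) (huM : ∀ y ∈ ball x ε, |u y| ≤ M) :
    IntegrableOn u (ball x ε) μ :=
  Measure.integrableOn_of_bounded measure_ball_lt_top.ne hu.aestronglyMeasurable
    (ae_restrict_of_forall_mem measurableSet_ball huM)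

lemma setAverage_ball_zero_le (hε : 0 < ε) (hg : IntegrableOn g (ball 0 ε) μ)
    (hc : ∀ h ∈ ball (0 : E) ε, g h + g (-h) ≤ 2 * c) : ⨍ h in ball (0 : E) ε, g h ∂μ ≤ c := by
  have hball : Neg.neg ⁻¹' ball (0 : E) ε = ball 0 ε := by simp
  have hneg := (Measure.measurePreserving_neg μ).setIntegral_preimage_emb
    (MeasurableEquiv.neg E).measurableEmbedding g (ball 0 ε)
  have hgneg : IntegrableOn (fun h ↦ g (-h)) (Neg.neg ⁻¹' ball (0 : E) ε) μ :=
    ((Measure.measurePreserving_neg μ).integrableOn_comp_preimage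
      (MeasurableEquiv.neg E).measurableEmbedding).2 hg
  rw [hball] at hneg hgneg
  have hsum : ∫ h in ball (0 : E) ε, (g h + g (-h)) ∂μ ≤ ∫ _ in ball (0 : E) ε, 2 * c ∂μ :=
    setIntegral_mono_on (hg.add hgneg) (integrableOn_const measure_ball_lt_top.ne)
      measurableSet_ball hc
  rw [integral_add hg hgneg, hneg, setIntegral_const, smul_eq_mul] at hsum
  have hpos : 0 < μ.real (ball (0 : E) ε) :=
    ENNReal.toReal_pos (measure_ball_pos μ 0 hε).ne' measure_ball_lt_top.ne
  rw [setAverage_eq, smul_eq_mul, inv_mul_le_iff₀ hpos]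
  linarith

lemma setAverage_ball_sub_le (hε : 0 < ε) (hu : Measurable u) (hv : Measurable v)
    (huM : ∀ y ∈ ball x ε, |u y| ≤ M) (hvM : ∀ y ∈ ball z ε, |v y| ≤ M')
    (hc : ∀ h ∈ ball (0 : E) ε, u (x + h) - v (z + h) + (u (x - h) - v (z - h)) ≤ 2 * c) :
    ⨍ y in ball x ε, u y ∂μ - ⨍ y in ball z ε, v y ∂μ ≤ c := by
  have hu0 : IntegrableOn (fun h ↦ u (x + h)) (ball 0 ε) μ :=
    integrableOn_ball_of_abs_le (hu.comp (measurable_const_add x))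
      fun h hh ↦ huM _ (by simpa using hh)
  have hv0 : IntegrableOn (fun h ↦ v (z + h)) (ball 0 ε) μ :=
    integrableOn_ball_of_abs_le (hv.comp (measurable_const_add z))
      fun h hh ↦ hvM _ (by simpa using hh)
  have key := setAverage_ball_zero_le μ hε (hu0.sub hv0)
    (by simpa only [Pi.sub_apply, ← sub_eq_add_neg] using hc)
  rwa [setAverage_eq, integral_sub' hu0 hv0, smul_sub, ← setAverage_eq, ← setAverage_eq,
    ← setAverage_ball_eq_setAverage_ball_zero, ← setAverage_ball_eq_setAverage_ball_zero] at key

end Average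

section DPP

lemma of_forall_max_sub {P : ℝ → Prop} {K K₀ δ : ℝ} (hδ : 0 < δ) (hK : P (max K K₀))
    (h : ∀ L, K₀ ≤ L → P L → P (max (L - δ) K₀)) : P K₀ := by
  have iterate : ∀ k : ℕ, P (max (K - k * δ) K₀) := by
    intro k
    induction k with
    | zero => simpa using hK
    | succ k ih =>
      have hstep := h _ (le_max_right _ _) ih
      rwa [← max_sub_sub_right, max_assoc, max_eq_right (by linarith : K₀ - δ ≤ K₀),
        sub_sub, ← add_one_mul, ← Nat.cast_succ] at hstep
  obtain ⟨k, hk⟩ := exists_nat_gt ((K - K₀) / δ)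
  rw [div_lt_iff₀ hδ] at hk
  simpa [max_eq_right (by linarith : K - k * δ ≤ K₀)] using iterate k

lemma thickening_subset_union_infDist_frontier_le {E : Type*} [NormedAddCommGroup E]
    [NormedSpace ℝ E] [FiniteDimensional ℝ E] (ε : ℝ) (Ω : Set E) :
    thickening ε Ω ⊆ Ω ∪ {y | y ∉ Ω ∧ infDist y (frontier Ω) ≤ ε} := by
  intro y hy
  refine or_iff_not_imp_left.2 fun hyΩ ↦ ⟨hyΩ, ?_⟩
  obtain ⟨x, hx, hyx⟩ := mem_thickening_iff.1 hy
  obtain ⟨b, hb, hyb⟩ := exists_mem_frontier_infDist_compl_eq_dist (s := Ωᶜ) hyΩ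
    (compl_ne_univ.2 ⟨x, hx⟩)
  rw [frontier_compl] at hb
  rw [compl_compl] at hyb
  calc infDist y (frontier Ω) ≤ dist y b := infDist_le_dist_of_mem hb
    _ = infDist y Ω := hyb.symm
    _ ≤ dist y x := infDist_le_dist_of_mem hx
    _ ≤ ε := hyx.le

variable {E : Type*} [PseudoMetricSpace E] [MeasurableSpace E] {μ : Measure E}
  {α β ε M : ℝ} {Ω Ω' : Set E} {u : E → ℝ} {x z : E}

/-- The dynamic programming principle with weights `α`, `β` at the point `x`. -/
def SatisfiesDPP (μ : Measure E) (α β ε : ℝ) (u : E → ℝ) (x : E) : Prop :=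
  u x = α / (2 * ε) * tugIntegral ε u x + β * ⨍ z in ball x ε, u z ∂μ

lemma SatisfiesDPP.neg (h : SatisfiesDPP μ α β ε u x) : SatisfiesDPP μ α β ε (-u) x := by
  simp only [SatisfiesDPP, tugIntegral_neg, setAverage_eq, Pi.neg_apply, integral_neg,
    smul_eq_mul] at h ⊢
  linarith

/-- Borel functions which satisfy the dynamic programming principle in `Ω` and are bounded by `M`
on the set `thickening ε Ω` of points that the principle in `Ω` refers to. -/
structure IsBoundedSolution (μ : Measure E) (α β ε M : ℝ) (Ω : Set E) (u : E → ℝ) : Prop where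
  measurable : Measurable u
  abs_le : ∀ y ∈ thickening ε Ω, |u y| ≤ M
  satisfiesDPP : ∀ x ∈ Ω, SatisfiesDPP μ α β ε u x

namespace IsBoundedSolution

lemma neg (hu : IsBoundedSolution μ α β ε M Ω u) : IsBoundedSolution μ α β ε M Ω (-u) where
  measurable := hu.measurable.neg
  abs_le y hy := (abs_neg (u y)).trans_le (hu.abs_le y hy)
  satisfiesDPP x hx := (hu.satisfiesDPP x hx).neg

lemma mono (hu : IsBoundedSolution μ α β ε M Ω u) (hΩ : Ω' ⊆ Ω) :
    IsBoundedSolution μ α β ε M Ω' u where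
  measurable := hu.measurable
  abs_le y hy := hu.abs_le y (thickening_subset_of_subset ε hΩ hy)
  satisfiesDPP x hx := hu.satisfiesDPP x (hΩ hx)

lemma zero (μ : Measure E) (α β ε : ℝ) (Ω : Set E) : IsBoundedSolution μ α β ε 0 Ω 0 where
  measurable := measurable_zero
  abs_le y _ := by simp
  satisfiesDPP x _ := by
    have tugIntegral_zero : tugIntegral ε 0 x = 0 :=
      self_eq_neg.1 (by simpa only [neg_zero] using tugIntegral_neg ε 0 x)
    simp [SatisfiesDPP, tugIntegral_zero]

lemma abs_le_of_mem_ball (hu : IsBoundedSolution μ α β ε M Ω u) (hx : x ∈ Ω) :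
    ∀ y ∈ ball x ε, |u y| ≤ M :=
  fun y hy ↦ hu.abs_le y (ball_subset_thickening hx ε hy)

lemma sub_le_two_mul (hu : IsBoundedSolution μ α β ε M Ω u) (hε : 0 < ε) (hx : x ∈ Ω)
    (hz : z ∈ Ω) : u x - u z ≤ 2 * M := by
  linarith [le_abs_self (u x), neg_le_abs (u z), hu.abs_le x (self_subset_thickening hε Ω hx),
    hu.abs_le z (self_subset_thickening hε Ω hz)]

end IsBoundedSolution

end DPP

section Comparison

variable {E : Type*} [NormedAddCommGroup E] [MeasurableSpace E] [BorelSpace E] [ProperSpace E]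
  {μ : Measure E} [μ.IsAddHaarMeasure] {α β ε M M' : ℝ} {Ω Ω' : Set E} {u v : E → ℝ} {x z : E}

namespace IsBoundedSolution

/-- A coupling of two tug-of-war games with noise: the pair `(h', k')` is the answer to the pair
`(h, k)` of steps chosen by one player, and the random step of one game is used in the other. -/
lemma sub_le_of_forall_response {a c : ℝ} (hu : IsBoundedSolution μ α β ε M Ω u)
    (hv : IsBoundedSolution μ α β ε M' Ω' v) (hx : x ∈ Ω) (hz : z ∈ Ω') (hα : 0 ≤ α) (hβ : 0 ≤ β)
    (hαβ : α + β = 1) (hε : 0 < ε)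
    (htug : ∀ t ∈ Ioo 0 ε, ∀ h k, ‖h‖ ≤ t → ‖k‖ ≤ t → ∃ h' k', ‖h'‖ ≤ t ∧ ‖k'‖ ≤ t ∧
      u (x + h) - v (z + k) + (u (x + h') - v (z + k')) ≤ 2 * (c - a * t ^ 2))
    (havg : ∀ h, ‖h‖ < ε → u (x + h) - v (z + h) + (u (x - h) - v (z - h)) ≤ 2 * c) :
    u x - v z ≤ c - α * a * ε ^ 2 / 3 := by
  have tug_le : tugIntegral ε u x - tugIntegral ε v z ≤ ∫ t in (0 : ℝ)..ε, 2 * (c - a * t ^ 2) := by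
    refine tugIntegral_sub_le_of_forall_response hε.le (hu.abs_le_of_mem_ball hx)
      (hv.abs_le_of_mem_ball hz) (by fun_prop) fun t ht p hp q hq ↦ ?_
    rw [mem_closedBall_iff_norm] at hp hq
    obtain ⟨h', k', hh', hk', hle⟩ := htug t ht _ _ hp hq
    rw [add_sub_cancel, add_sub_cancel] at hle
    exact ⟨x + h', by simpa using hh', z + k', by simpa using hk', hle⟩
  have average_le : ⨍ y in ball x ε, u y ∂μ - ⨍ y in ball z ε, v y ∂μ ≤ c :=
    setAverage_ball_sub_le μ hε hu.measurable hv.measurable (hu.abs_le_of_mem_ball hx)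
      (hv.abs_le_of_mem_ball hz) fun h hh ↦ havg h (mem_ball_zero_iff.1 hh)
  have integral_eq : ∫ t in (0 : ℝ)..ε, 2 * (c - a * t ^ 2) = 2 * ε * (c - a * ε ^ 2 / 3) := by
    rw [intervalIntegral.integral_const_mul, intervalIntegral.integral_sub (by simp)
      (Continuous.intervalIntegrable (by fun_prop) _ _), intervalIntegral.integral_const_mul,
      integral_pow, intervalIntegral.integral_const, smul_eq_mul]
    ring
  rw [integral_eq] at tug_le
  calc u x - v z
      = α / (2 * ε) * (tugIntegral ε u x - tugIntegral ε v z)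
          + β * (⨍ y in ball x ε, u y ∂μ - ⨍ y in ball z ε, v y ∂μ) := by
        rw [hu.satisfiesDPP x hx, hv.satisfiesDPP z hz]
        ring
    _ ≤ α / (2 * ε) * (2 * ε * (c - a * ε ^ 2 / 3)) + β * c := by gcongr
    _ = (α + β) * c - α * a * ε ^ 2 / 3 := by
        field_simp
        ring
    _ = c - α * a * ε ^ 2 / 3 := by rw [hαβ, one_mul]

end IsBoundedSolution

end Comparison

section MaximumPrinciple

lemma norm_sq_sub_le_norm_add_sq {E : Type*} [SeminormedAddCommGroup E] {x h : E} {t : ℝ}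
    (hh : ‖h‖ ≤ t) : ‖x‖ ^ 2 - 2 * t * ‖x‖ ≤ ‖x + h‖ ^ 2 := by
  have htri : ‖x‖ ≤ ‖x + h‖ + t := (norm_le_add_norm_add x h).trans (by gcongr)
  nlinarith [norm_nonneg x, norm_nonneg h, sq_nonneg (‖x + h‖ - ‖x‖)]

variable {E : Type*} [NormedAddCommGroup E] [NormedSpace ℝ E] {x h : E} {t : ℝ}

lemma exists_norm_eq_norm_add_eq_add [Nontrivial E] (x : E) (ht : 0 ≤ t) :
    ∃ h : E, ‖h‖ = t ∧ ‖x + h‖ = ‖x‖ + t := by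
  rcases eq_or_ne x 0 with rfl | hx
  · obtain ⟨h, hh⟩ := exists_norm_eq E ht
    exact ⟨h, hh, by simp [hh]⟩
  · have hnorm : ‖(t / ‖x‖) • x‖ = t := by
      rw [norm_smul, Real.norm_of_nonneg (by positivity), div_mul_cancel₀ _ (norm_ne_zero_iff.2 hx)]
    refine ⟨(t / ‖x‖) • x, hnorm, ?_⟩
    rw [(SameRay.sameRay_nonneg_smul_right x (by positivity)).norm_add, hnorm]

lemma two_mul_norm_sq_le (x h : E) : 2 * ‖x‖ ^ 2 ≤ ‖x + h‖ ^ 2 + ‖x - h‖ ^ 2 := by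
  have htri : 2 * ‖x‖ ≤ ‖x + h‖ + ‖x - h‖ := by
    calc 2 * ‖x‖ = ‖(x + h) + (x - h)‖ := by
          rw [add_add_sub_cancel, ← two_smul ℝ, norm_smul, Real.norm_two]
      _ ≤ ‖x + h‖ + ‖x - h‖ := norm_add_le _ _
  nlinarith [norm_nonneg x, sq_nonneg (‖x + h‖ - ‖x - h‖)]

variable [Nontrivial E] [MeasurableSpace E] [BorelSpace E] [ProperSpace E]
  {μ : Measure E} [μ.IsAddHaarMeasure] {α β ε η κ M M' : ℝ} {Ω : Set E} {u : E → ℝ}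

namespace IsBoundedSolution

lemma add_mul_norm_sq_le (hu : IsBoundedSolution μ α β ε M Ω u) (hx : x ∈ Ω)
    (hα : 0 ≤ α) (hβ : 0 ≤ β) (hαβ : α + β = 1) (hε : 0 < ε) (hη : 0 ≤ η)
    (hκ : ∀ y ∈ thickening ε Ω, u y + η * ‖y‖ ^ 2 ≤ κ) :
    u x + η * ‖x‖ ^ 2 ≤ κ - η * α * ε ^ 2 / 6 := by
  have bound : ∀ h, ‖h‖ < ε → u (x + h) ≤ κ - η * ‖x + h‖ ^ 2 := fun h hh ↦
    le_sub_iff_add_le.2 <| hκ _ (ball_subset_thickening hx ε (by simpa using hh))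
  have key := hu.sub_le_of_forall_response (.zero μ α β ε Ω) hx hx hα hβ hαβ hε (a := η / 2)
    (c := κ - η * ‖x‖ ^ 2)
    (fun t ht h k hh _ ↦ by
      obtain ⟨h', hh', hxh'⟩ := exists_norm_eq_norm_add_eq_add x ht.1.le
      refine ⟨h', 0, hh'.le, by simpa using ht.1.le, ?_⟩
      have inward := bound h (hh.trans_lt ht.2)
      have outward := bound h' (hh'.trans_lt ht.2)
      rw [hxh'] at outward
      have hsq := mul_le_mul_of_nonneg_left (norm_sq_sub_le_norm_add_sq (x := x) hh) hη
      simp only [Pi.zero_apply]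
      linarith)
    (fun h hh ↦ by
      have plus := bound h hh
      have minus := bound (-h) (by rwa [norm_neg])
      rw [← sub_eq_add_neg] at minus
      have hsq := mul_le_mul_of_nonneg_left (two_mul_norm_sq_le x h) hη
      simp only [Pi.zero_apply]
      linarith)
  simp only [Pi.zero_apply] at key
  linarith

lemma le_of_le_diff (hu : IsBoundedSolution μ α β ε M' Ω u) (hΩ : Bornology.IsBounded Ω)
    (hα : 0 < α) (hβ : 0 ≤ β) (hαβ : α + β = 1) (hε : 0 < ε)
    (hM : ∀ y ∈ thickening ε Ω \ Ω, u y ≤ M) : ∀ y ∈ thickening ε Ω, u y ≤ M := by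
  obtain ⟨R, hR⟩ := (hΩ.thickening (δ := ε)).exists_norm_le
  have perturbed : ∀ η > 0, ∀ y ∈ thickening ε Ω, u y + η * ‖y‖ ^ 2 ≤ M + η * R ^ 2 := by
    intro η hη
    have hsq : ∀ y ∈ thickening ε Ω, η * ‖y‖ ^ 2 ≤ η * R ^ 2 := fun y hy ↦ by
      gcongr
      exact hR y hy
    refine of_forall_max_sub (P := fun κ ↦ ∀ y ∈ thickening ε Ω, u y + η * ‖y‖ ^ 2 ≤ κ)
      (K := M' + η * R ^ 2) (δ := η * α * ε ^ 2 / 6) (by positivity) (fun y hy ↦ ?_)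
      (fun κ _ hκ y hy ↦ ?_)
    · exact le_max_of_le_left (add_le_add ((le_abs_self _).trans (hu.abs_le y hy)) (hsq y hy))
    · by_cases hyΩ : y ∈ Ω
      · exact le_max_of_le_left (hu.add_mul_norm_sq_le hyΩ hα.le hβ hαβ hε hη.le hκ)
      · exact le_max_of_le_right (add_le_add (hM y ⟨hy, hyΩ⟩) (hsq y hy))
  intro y hy
  have hlim : Filter.Tendsto (fun η ↦ M + η * R ^ 2 - η * ‖y‖ ^ 2) (nhdsWithin 0 (Ioi 0))
      (nhds M) := by
    have hcont : Continuous fun η ↦ M + η * R ^ 2 - η * ‖y‖ ^ 2 := by fun_prop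
    simpa using (hcont.tendsto 0).mono_left nhdsWithin_le_nhds
  refine ge_of_tendsto hlim ?_
  filter_upwards [self_mem_nhdsWithin] with η hη
  linarith [perturbed η hη y hy]

lemma of_abs_le_diff (hu : IsBoundedSolution μ α β ε M' Ω u) (hΩ : Bornology.IsBounded Ω)
    (hα : 0 < α) (hβ : 0 ≤ β) (hαβ : α + β = 1) (hε : 0 < ε)
    (hM : ∀ y ∈ thickening ε Ω \ Ω, |u y| ≤ M) : IsBoundedSolution μ α β ε M Ω u where
  measurable := hu.measurable
  abs_le y hy := abs_le'.2
    ⟨hu.le_of_le_diff hΩ hα hβ hαβ hε (fun y hy ↦ (le_abs_self _).trans (hM y hy)) y hy,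
      hu.neg.le_of_le_diff hΩ hα hβ hαβ hε (fun y hy ↦ (neg_le_abs _).trans (hM y hy)) y hy⟩
  satisfiesDPP := hu.satisfiesDPP

end IsBoundedSolution

end MaximumPrinciple

section Gauge

variable {q σ σ₁ σ₂ : ℝ}

/-- The concave profile `σ ↦ σ - σ ^ (3 / 2)`, increasing on `[0, 4 / 9]`, to which differences of
solutions are compared; its second derivative tends to `-∞` at `0`. -/
noncomputable def concaveGauge (σ : ℝ) : ℝ := σ - σ * √σ

lemma concaveGauge_sq (hq : 0 ≤ q) : concaveGauge (q ^ 2) = q ^ 2 - q ^ 3 := by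
  rw [concaveGauge, Real.sqrt_sq hq]
  ring

lemma concaveGauge_le_self (hσ : 0 ≤ σ) : concaveGauge σ ≤ σ := by
  rw [concaveGauge]
  linarith [mul_nonneg hσ (Real.sqrt_nonneg σ)]

lemma concaveGauge_mono (hσ₁ : 0 ≤ σ₁) (hσ : σ₁ ≤ σ₂) (hσ₂ : σ₂ ≤ 4 / 9) :
    concaveGauge σ₁ ≤ concaveGauge σ₂ := by
  have hsqrt_nonneg := Real.sqrt_nonneg σ₁
  have hsqrt_le := Real.sqrt_le_sqrt hσ
  have hsqrt_le' : √σ₂ ≤ 2 / 3 := by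
    rw [Real.sqrt_le_left (by norm_num)]
    linarith
  rw [← Real.sq_sqrt hσ₁, ← Real.sq_sqrt (hσ₁.trans hσ), concaveGauge_sq hsqrt_nonneg,
    concaveGauge_sq (hsqrt_nonneg.trans hsqrt_le)]
  generalize √σ₁ = a at *
  generalize √σ₂ = b at *
  have hfactor : 0 ≤ (b - a) * (b + a - b ^ 2 - b * a - a ^ 2) := by
    apply mul_nonneg <;> nlinarith
  linarith

lemma concaveGauge_nonneg (hσ : 0 ≤ σ) (hσ' : σ ≤ 4 / 9) : 0 ≤ concaveGauge σ := by
  simpa [concaveGauge] using concaveGauge_mono le_rfl hσ hσ'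

lemma concaveGauge_le_tangent_sub_sq (hq : 0 < q) (hσ : σ ∈ Icc 0 (4 * q ^ 2)) :
    concaveGauge σ ≤ concaveGauge (q ^ 2) + (1 - 3 / 2 * q) * (σ - q ^ 2)
      - (σ - q ^ 2) ^ 2 / (4 * q) := by
  have hsqrt_nonneg := Real.sqrt_nonneg σ
  have hsqrt_le : √σ ≤ 2 * q := by
    rw [Real.sqrt_le_left (by positivity)]
    linarith [hσ.2]
  rw [← Real.sq_sqrt hσ.1, concaveGauge_sq hsqrt_nonneg, concaveGauge_sq hq.le]
  generalize √σ = a at *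
  have hdefect : (a ^ 2 - q ^ 2) ^ 2 / (4 * q) ≤ (a - q) ^ 2 * (a + q / 2) := by
    rw [div_le_iff₀ (by positivity)]
    have hfactor : (a + q) ^ 2 ≤ (a + q / 2) * (4 * q) := by nlinarith
    nlinarith [mul_le_mul_of_nonneg_left hfactor (sq_nonneg (a - q))]
  linarith

lemma concaveGauge_add_le {Y : ℝ} (hq : 0 < q) (hq' : q ≤ 2 / 3) (hσ₁ : σ₁ ∈ Icc 0 (4 * q ^ 2))
    (hσ₂ : σ₂ ∈ Icc 0 (4 * q ^ 2)) (hY : 0 ≤ Y) (hsum : σ₁ + σ₂ ≤ 2 * q ^ 2 + Y) :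
    concaveGauge σ₁ + concaveGauge σ₂
      ≤ 2 * concaveGauge (q ^ 2) + Y - ((σ₁ - q ^ 2) ^ 2 + (σ₂ - q ^ 2) ^ 2) / (4 * q) := by
  have hlinear : (1 - 3 / 2 * q) * (σ₁ + σ₂ - 2 * q ^ 2) ≤ Y := by nlinarith
  have htangent₁ := concaveGauge_le_tangent_sub_sq hq hσ₁
  have htangent₂ := concaveGauge_le_tangent_sub_sq hq hσ₂
  rw [add_div]
  linarith

end Gauge

section RatioPerturbation

/-- `σ = (q² + p) / (1 + κ)` is the value of a ratio that equals `q²` at rest, after the numerator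
and the denominator, in units of the latter, have changed by `p` and `κ` through moves of size
`τ`. -/
structure RatioPerturbation (q τ p κ σ : ℝ) : Prop where
  q_pos : 0 < q
  q_le : q ≤ 1 / 512
  two_mul_le : 2 * τ ≤ q ^ 2
  abs_num_le : |p| ≤ 2 * τ
  abs_den_le : |κ| ≤ τ
  mul_one_add_eq : σ * (1 + κ) = q ^ 2 + p

namespace RatioPerturbation

variable {q τ p κ σ p₁ κ₁ σ₁ p₂ κ₂ σ₂ : ℝ}

lemma nonneg (h : RatioPerturbation q τ p κ σ) : 0 ≤ τ := (abs_nonneg κ).trans h.abs_den_le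

lemma le_one_div (h : RatioPerturbation q τ p κ σ) : τ ≤ 1 / 512 := by
  nlinarith [h.two_mul_le, h.q_pos, h.q_le]

lemma mem_Icc (h : RatioPerturbation q τ p κ σ) : σ ∈ Icc 0 (4 * q ^ 2) := by
  have hκ := abs_le.1 h.abs_den_le
  have hp := abs_le.1 h.abs_num_le
  have hτ := h.le_one_div
  have hτq := h.two_mul_le
  have hden : 0 < 1 + κ := by linarith
  rw [← mul_div_cancel_right₀ σ hden.ne', h.mul_one_add_eq]
  refine ⟨div_nonneg (by linarith) hden.le, ?_⟩
  rw [div_le_iff₀ hden]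
  nlinarith [sq_nonneg q]

lemma abs_sub_le (h : RatioPerturbation q τ p κ σ) : |σ - (q ^ 2 + p)| ≤ 4 * q ^ 2 * τ := by
  rw [← h.mul_one_add_eq, mul_one_add, sub_add_cancel_left, abs_neg, abs_mul,
    abs_of_nonneg h.mem_Icc.1]
  exact mul_le_mul h.mem_Icc.2 h.abs_den_le (abs_nonneg κ) (by positivity)

lemma add_le (h₁ : RatioPerturbation q τ p₁ κ₁ σ₁) (h₂ : RatioPerturbation q τ p₂ κ₂ σ₂)
    (hκ : -τ ^ 2 ≤ κ₁ + κ₂) : σ₁ + σ₂ ≤ 2 * q ^ 2 + (p₁ + p₂) + 5 * τ ^ 2 := by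
  have hτ := h₁.nonneg
  have hq : q ^ 2 ≤ 1 / 12 := by nlinarith [h₁.q_pos, h₁.q_le]
  have hfirst : σ₁ * -(κ₁ + κ₂) ≤ 4 * q ^ 2 * τ ^ 2 :=
    (mul_le_mul_of_nonneg_left (by linarith) h₁.mem_Icc.1).trans
      (mul_le_mul_of_nonneg_right h₁.mem_Icc.2 (sq_nonneg τ))
  have hdiff : |σ₁ - σ₂| ≤ 4 * τ + 8 * q ^ 2 * τ := by
    have hσ₁ := abs_le.1 h₁.abs_sub_le
    have hσ₂ := abs_le.1 h₂.abs_sub_le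
    have hp₁ := abs_le.1 h₁.abs_num_le
    have hp₂ := abs_le.1 h₂.abs_num_le
    rw [abs_le]
    constructor <;> linarith
  have hsecond : (σ₁ - σ₂) * κ₂ ≤ (4 * τ + 8 * q ^ 2 * τ) * τ :=
    (le_abs_self _).trans <| (abs_mul _ _).trans_le <|
      mul_le_mul hdiff h₂.abs_den_le (abs_nonneg _) (by positivity)
  have hsum : σ₁ + σ₂ = 2 * q ^ 2 + (p₁ + p₂) + (σ₁ * -(κ₁ + κ₂) + (σ₁ - σ₂) * κ₂) := by
    linarith [h₁.mul_one_add_eq, h₂.mul_one_add_eq]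
  nlinarith [mul_le_mul_of_nonneg_right hq (sq_nonneg τ)]

lemma concaveGauge_add_le_of_parallel (h₁ : RatioPerturbation q τ 0 κ₁ σ₁)
    (h₂ : RatioPerturbation q τ 0 κ₂ σ₂) (hκ : -τ ^ 2 ≤ κ₁ + κ₂) :
    concaveGauge σ₁ + concaveGauge σ₂ ≤ 2 * concaveGauge (q ^ 2) + 5 * τ ^ 2 := by
  have hq := h₁.q_pos
  have hgauge := concaveGauge_add_le hq (by linarith [h₁.q_le]) h₁.mem_Icc h₂.mem_Icc
    (by positivity) ((h₁.add_le h₂ hκ).trans_eq (by ring) : _ ≤ 2 * q ^ 2 + 5 * τ ^ 2)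
  have hgain : 0 ≤ ((σ₁ - q ^ 2) ^ 2 + (σ₂ - q ^ 2) ^ 2) / (4 * q) := by positivity
  linarith

lemma concaveGauge_add_le_of_opposite (h₁ : RatioPerturbation q τ p₁ κ₁ σ₁)
    (h₂ : RatioPerturbation q τ p₂ κ₂ σ₂) (hκ : -τ ^ 2 ≤ κ₁ + κ₂)
    (hsum : p₁ + p₂ ≤ τ ^ 2 / (8 * q)) (hdiff : 3 * τ ≤ |p₁ - p₂|) :
    concaveGauge σ₁ + concaveGauge σ₂ ≤ 2 * concaveGauge (q ^ 2) - τ ^ 2 / (4 * q) := by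
  have hq := h₁.q_pos
  have hτ := h₁.nonneg
  have hσ_diff : 29 / 10 * τ ≤ |σ₁ - σ₂| := by
    have hq' : 8 * q ^ 2 * τ ≤ 1 / 10 * τ := by
      gcongr
      nlinarith [h₁.q_le]
    have htri : |p₁ - p₂| ≤ |σ₁ - σ₂| + |σ₁ - (q ^ 2 + p₁)| + |σ₂ - (q ^ 2 + p₂)| := by
      calc |p₁ - p₂| = |(σ₁ - σ₂) - (σ₁ - (q ^ 2 + p₁)) + (σ₂ - (q ^ 2 + p₂))| := by ring_nf
        _ ≤ _ := (abs_add_le _ _).trans (by gcongr; exact abs_sub _ _)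
    linarith [h₁.abs_sub_le, h₂.abs_sub_le]
  have hsq : 4 * τ ^ 2 ≤ (σ₁ - q ^ 2) ^ 2 + (σ₂ - q ^ 2) ^ 2 := by
    have hdiff_sq := pow_le_pow_left₀ (by positivity) hσ_diff 2
    rw [sq_abs] at hdiff_sq
    nlinarith [sq_nonneg (σ₁ + σ₂ - 2 * q ^ 2), sq_nonneg τ]
  have hY : 5 * τ ^ 2 ≤ 5 / 8 * (τ ^ 2 / q) := by
    rw [← mul_div_assoc, le_div_iff₀ hq]
    nlinarith [sq_nonneg τ, h₁.q_le]
  calc concaveGauge σ₁ + concaveGauge σ₂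
      ≤ 2 * concaveGauge (q ^ 2) + (τ ^ 2 / (8 * q) + 5 * τ ^ 2)
          - ((σ₁ - q ^ 2) ^ 2 + (σ₂ - q ^ 2) ^ 2) / (4 * q) :=
        concaveGauge_add_le hq (by linarith [h₁.q_le]) h₁.mem_Icc h₂.mem_Icc (by positivity)
          (by linarith [h₁.add_le h₂ hκ])
    _ ≤ 2 * concaveGauge (q ^ 2) + (τ ^ 2 / (8 * q) + 5 / 8 * (τ ^ 2 / q))
          - 4 * τ ^ 2 / (4 * q) := by gcongr
    _ = 2 * concaveGauge (q ^ 2) - τ ^ 2 / (4 * q) := by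
        field_simp
        ring

lemma concaveGauge_add_le_of_toward {X : ℝ} (h : RatioPerturbation q τ p κ σ) (hX : 0 ≤ X)
    (hp : p + 4 * q ^ 2 * τ ≤ 2 * τ + X) :
    concaveGauge σ + concaveGauge (q ^ 2 - 2 * τ)
      ≤ 2 * concaveGauge (q ^ 2) + X - τ ^ 2 / q := by
  have hq := h.q_pos
  have hσ := (abs_le.1 h.abs_sub_le).2
  have hgauge := concaveGauge_add_le (Y := X) hq (by linarith [h.q_le]) h.mem_Icc
    (⟨by linarith [h.two_mul_le], by nlinarith [h.nonneg]⟩ : q ^ 2 - 2 * τ ∈ Icc 0 (4 * q ^ 2)) hX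
    (by linarith)
  have hgain : τ ^ 2 / q ≤ ((σ - q ^ 2) ^ 2 + (q ^ 2 - 2 * τ - q ^ 2) ^ 2) / (4 * q) := by
    rw [div_le_div_iff₀ hq (by positivity)]
    nlinarith [mul_nonneg hq.le (sq_nonneg (σ - q ^ 2))]
  linarith

end RatioPerturbation

end RatioPerturbation

section Parallelogram

variable {q s τ p₁ p₂ : ℝ}

lemma le_add_div_of_sq_le {S s e : ℝ} (hs : 0 < s) (he : 0 ≤ e) (h : S ^ 2 ≤ s ^ 2 + e) :
    S ≤ s + e / (2 * s) := by
  refine (le_abs_self S).trans (abs_le_of_sq_le_sq (h.trans ?_) (by positivity))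
  have hsq : (s + e / (2 * s)) ^ 2 = s ^ 2 + e + (e / (2 * s)) ^ 2 := by
    field_simp
    ring
  rw [hsq]
  linarith [sq_nonneg (e / (2 * s))]

/-- If two opposite vertices of a parallelogram are at distances `s + p₁` and `s + p₂` from a
point at distance `s` from its centre, then either the two vertices are nearly collinear with that
point, or the first one is definitely nearer than the radial position `s + 2 * τ`. -/
lemma parallelogram_dichotomy (hq : 0 < q) (hq' : q ≤ 1 / 512) (hτ : 0 < τ) (hτs : 4 * τ ≤ s)
    (hqs : q ^ 2 ≤ 2 * s) (hsq : (s + p₁) ^ 2 + (s + p₂) ^ 2 ≤ 2 * s ^ 2 + 8 * τ ^ 2)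
    (hdiff : |p₁ - p₂| ≤ 4 * τ) :
    (p₁ + p₂ ≤ τ ^ 2 / (8 * q) ∧ 3 * τ ≤ |p₁ - p₂|) ∨ p₁ + 4 * q ^ 2 * τ ≤ 2 * τ := by
  have hs : 0 < s := by linarith
  obtain ⟨D, hD⟩ : ∃ D, D = (p₁ - p₂) / 2 := ⟨_, rfl⟩
  obtain ⟨e, he⟩ : ∃ e, e = 4 * τ ^ 2 - D ^ 2 := ⟨_, rfl⟩
  have he_nonneg : 0 ≤ e := by
    have hD_le := abs_le.1 hdiff
    nlinarith
  have hmean : (p₁ + p₂) / 2 ≤ e / (2 * s) := by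
    have := le_add_div_of_sq_le (S := s + (p₁ + p₂) / 2) hs he_nonneg (by rw [he, hD]; linarith)
    linarith
  rcases le_or_gt e (τ ^ 2 * q / 16) with he_le | he_gt
  · refine Or.inl ⟨?_, ?_⟩
    · calc p₁ + p₂ ≤ e / s := by
            rw [mul_comm, ← div_div] at hmean
            linarith
        _ ≤ (τ ^ 2 * q / 16) / (q ^ 2 / 2) := by
            gcongr
            linarith
        _ = τ ^ 2 / (8 * q) := by
            field_simp
            norm_num
    · refine le_of_pow_le_pow_left₀ two_ne_zero (abs_nonneg _) ?_
      have hD_sq : (p₁ - p₂) ^ 2 = 4 * (4 * τ ^ 2 - e) := by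
        rw [he, hD]
        ring
      rw [sq_abs, hD_sq]
      nlinarith [pow_pos hτ 2]
  · right
    have hradial : D ≤ 2 * τ - e / (4 * τ) := by
      rw [le_sub_iff_add_le, ← le_sub_iff_add_le', div_le_iff₀ (by positivity)]
      nlinarith [sq_nonneg (2 * τ - D)]
    have hmean' : e / (2 * s) ≤ e / (8 * τ) :=
      div_le_div_of_nonneg_left he_nonneg (by positivity) (by linarith)
    have hgain : 4 * q ^ 2 * τ ≤ e / (8 * τ) := by
      rw [le_div_iff₀ (by positivity)]
      nlinarith [mul_pos hτ hτ, mul_pos hq (mul_pos hτ hτ)]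
    have hhalf : e / (4 * τ) = 2 * (e / (8 * τ)) := by ring
    linarith

end Parallelogram

section Weight

variable {E : Type*} [NormedAddCommGroup E] {r t : ℝ} {z₀ m c : E}

/-- The concave paraboloid that is positive exactly in the ball of radius `4 * r` about `z₀`; it
localises the comparison. -/
noncomputable def ballWeight (r : ℝ) (z₀ m : E) : ℝ := r - ‖m - z₀‖ ^ 2 / (16 * r)

lemma ballWeight_le (hr : 0 < r) : ballWeight r z₀ m ≤ r :=
  sub_le_self r (by positivity)

lemma norm_sub_lt_of_ballWeight_pos (hr : 0 < r) (h : 0 < ballWeight r z₀ m) :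
    ‖m - z₀‖ < 4 * r := by
  rw [ballWeight, sub_pos, div_lt_iff₀ (by positivity)] at h
  exact lt_of_pow_lt_pow_left₀ 2 (by positivity) (by linarith)

lemma half_le_ballWeight (hr : 0 < r) (hm : ‖m - z₀‖ ≤ r) : r / 2 ≤ ballWeight r z₀ m := by
  have hsq : ‖m - z₀‖ ^ 2 / (16 * r) ≤ r / 2 := by
    rw [div_le_iff₀ (by positivity)]
    nlinarith [norm_nonneg (m - z₀)]
  rw [ballWeight]
  linarith

variable [InnerProductSpace ℝ E]

lemma ballWeight_add (r : ℝ) (z₀ m c : E) :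
    ballWeight r z₀ (m + c)
      = ballWeight r z₀ m - (2 * inner ℝ (m - z₀) c + ‖c‖ ^ 2) / (16 * r) := by
  rw [ballWeight, ballWeight, add_sub_right_comm, norm_add_sq_real]
  ring

lemma abs_ballWeight_add_sub_le (hr : 0 < r) (h : 0 < ballWeight r z₀ m) (hc : ‖c‖ ≤ t)
    (htr : t ≤ r) : |ballWeight r z₀ (m + c) - ballWeight r z₀ m| ≤ t := by
  have ht : 0 ≤ t := (norm_nonneg c).trans hc
  have hinner : |inner ℝ (m - z₀) c| ≤ 4 * r * t := (abs_real_inner_le_norm _ _).trans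
    (mul_le_mul (norm_sub_lt_of_ballWeight_pos hr h).le hc (norm_nonneg _) (by positivity))
  have hsq : ‖c‖ ^ 2 ≤ r * t := by nlinarith [norm_nonneg c]
  rw [ballWeight_add, sub_sub_cancel_left, abs_neg, abs_div,
    abs_of_pos (by positivity : 0 < 16 * r), div_le_iff₀ (by positivity)]
  calc |2 * inner ℝ (m - z₀) c + ‖c‖ ^ 2| ≤ 2 * |inner ℝ (m - z₀) c| + ‖c‖ ^ 2 := by
        refine (abs_add_le _ _).trans_eq ?_
        rw [abs_mul, abs_two, abs_of_nonneg (sq_nonneg ‖c‖)]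
    _ ≤ t * (16 * r) := by nlinarith

lemma neg_sq_div_le_ballWeight_add_sub_add (hr : 0 < r) (h : 0 < ballWeight r z₀ m)
    (hc : ‖c‖ ≤ t) :
    -(t ^ 2 / ballWeight r z₀ m) ≤ ballWeight r z₀ (m + c) - ballWeight r z₀ m
        + (ballWeight r z₀ (m + -c) - ballWeight r z₀ m) := by
  calc -(t ^ 2 / ballWeight r z₀ m) ≤ -(‖c‖ ^ 2 / (8 * r)) := by
        gcongr
        linarith [ballWeight_le (z₀ := z₀) (m := m) hr]
    _ = _ := by
        rw [ballWeight_add, ballWeight_add, inner_neg_right, norm_neg]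
        field_simp
        ring

end Weight

section Midpoint

variable {R V : Type*} [Ring R] [Invertible (2 : R)] [AddCommGroup V] [Module R V]

lemma midpoint_add_add (x z h k : V) :
    midpoint R (x + h) (z + k) = midpoint R x z + midpoint R h k := by
  rw [add_comm x, add_comm z, add_comm (midpoint R x z)]
  exact (midpoint_vadd_midpoint (R := R) h k x z).symm

lemma midpoint_neg_neg (h k : V) : midpoint R (-h) (-k) = -midpoint R h k := by
  rw [midpoint_eq_smul_add, midpoint_eq_smul_add, ← neg_add, smul_neg]

lemma norm_midpoint_le {E : Type*} [SeminormedAddCommGroup E] [NormedSpace ℝ E] {h k : E} {t : ℝ}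
    (hh : ‖h‖ ≤ t) (hk : ‖k‖ ≤ t) : ‖midpoint ℝ h k‖ ≤ t := by
  rw [midpoint_eq_smul_add, norm_smul, invOf_eq_inv, norm_inv, Real.norm_two,
    inv_mul_le_iff₀ two_pos]
  linarith [norm_add_le h k]

end Midpoint

section PairBound

variable {E : Type*} [NormedAddCommGroup E] {ε r d t : ℝ} {z₀ x z a b h k : E}

/-- The change of the distance of `x` and `z`, in units of `d`, under the steps `h` and `k`. -/
noncomputable def distChange (d : ℝ) (x z h k : E) : ℝ :=
  (dist (x + h) (z + k) - dist x z) / d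

lemma abs_distChange_le (hd : 0 ≤ d) (hh : ‖h‖ ≤ t) (hk : ‖k‖ ≤ t) :
    |distChange d x z h k| ≤ 2 * (t / d) := by
  have hdist : |dist (x + h) (z + k) - dist x z| ≤ 2 * t := by
    have hle := dist_dist_dist_le (x + h) (z + k) x z
    rw [Real.dist_eq, dist_self_add_left, dist_self_add_left] at hle
    linarith
  rw [distChange, abs_div, abs_of_nonneg hd, ← mul_div_assoc]
  gcongr

variable [NormedSpace ℝ E]

/-- The distance of `a` and `b`, enlarged by `2 * ε` so that it does not degenerate below the step
size, in units of the weight of their midpoint. -/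
noncomputable def relDist (ε r : ℝ) (z₀ a b : E) : ℝ :=
  (dist a b + 2 * ε) / ballWeight r z₀ (midpoint ℝ a b)

/-- The bound `u a - u b ≤ K + A * concaveGauge σ`, with `σ` the relative distance of `a` and `b`,
for all pairs with `σ ≤ 4 * q₀ ^ 2` whose midpoint has positive weight. -/
def PairBound (u : E → ℝ) (A ε r q₀ : ℝ) (z₀ : E) (K : ℝ) : Prop :=
  ∀ a b, 0 < ballWeight r z₀ (midpoint ℝ a b) → relDist ε r z₀ a b ≤ 4 * q₀ ^ 2 →
    u a - u b ≤ K + A * concaveGauge (relDist ε r z₀ a b)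

/-- The change of the weight of the midpoint of `x` and `z`, in units of its initial value `d`,
under the steps `h` and `k`. -/
noncomputable def weightChange (r d : ℝ) (z₀ x z h k : E) : ℝ :=
  (ballWeight r z₀ (midpoint ℝ (x + h) (z + k)) - d) / d

/-- A pair `x`, `z` whose midpoint has weight `d > 0` and whose relative distance is the square
of the small number `q`. -/
structure IsSmallPair (ε r q d : ℝ) (z₀ x z : E) : Prop where
  eps_pos : 0 < ε
  r_pos : 0 < r
  q_pos : 0 < q
  q_le : q ≤ 1 / 512
  d_pos : 0 < d
  ballWeight_eq : ballWeight r z₀ (midpoint ℝ x z) = d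
  dist_add_eq : dist x z + 2 * ε = q ^ 2 * d

lemma relDist_pos (hε : 0 < ε) (hw : 0 < ballWeight r z₀ (midpoint ℝ a b)) :
    0 < relDist ε r z₀ a b :=
  div_pos (by positivity) hw

lemma mem_ball_of_relDist_le_one (hr : 0 < r) (hε : 0 ≤ ε)
    (hw : 0 < ballWeight r z₀ (midpoint ℝ a b)) (hab : relDist ε r z₀ a b ≤ 1) :
    a ∈ ball z₀ (6 * r) ∧ b ∈ ball z₀ (6 * r) := by
  rw [relDist, div_le_one hw] at hab
  have hleft : dist a (midpoint ℝ a b) = dist a b / 2 := by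
    rw [dist_left_midpoint, Real.norm_two, inv_mul_eq_div]
  have hright : dist b (midpoint ℝ a b) = dist a b / 2 := by
    rw [dist_right_midpoint, Real.norm_two, inv_mul_eq_div]
  have hcentre : dist (midpoint ℝ a b) z₀ < 4 * r := by
    rw [dist_eq_norm]
    exact norm_sub_lt_of_ballWeight_pos hr hw
  have hweight := ballWeight_le (z₀ := z₀) (m := midpoint ℝ a b) hr
  rw [mem_ball, mem_ball]
  constructor
  · linarith [dist_triangle a (midpoint ℝ a b) z₀]
  · linarith [dist_triangle b (midpoint ℝ a b) z₀]

end PairBound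

section SmallPair

variable {E : Type*} [NormedAddCommGroup E] [InnerProductSpace ℝ E]
  {u : E → ℝ} {A ε r q q₀ K d t : ℝ} {z₀ x z h k : E}

lemma sq_add_distChange_add_sq_le (x z : E) (hh : ‖h‖ ≤ t) (hk : ‖k‖ ≤ t) :
    (dist x z / d + distChange d x z h k) ^ 2 + (dist x z / d + distChange d x z (-h) (-k)) ^ 2
      ≤ 2 * (dist x z / d) ^ 2 + 8 * (t / d) ^ 2 := by
  have hhk : ‖h - k‖ ^ 2 ≤ (2 * t) ^ 2 := by
    gcongr
    linarith [norm_sub_le h k]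
  have hsum : dist (x + h) (z + k) ^ 2 + dist (x + -h) (z + -k) ^ 2
      ≤ 2 * dist x z ^ 2 + 8 * t ^ 2 := by
    have hlaw := parallelogram_law_with_norm ℝ (x - z) (h - k)
    rw [dist_eq_norm, dist_eq_norm, dist_eq_norm, add_sub_add_comm, ← sub_eq_add_neg,
      ← sub_eq_add_neg, sub_sub_sub_comm]
    linarith
  simp only [distChange, ← add_div, add_sub_cancel, div_pow, ← mul_div_assoc]
  gcongr

namespace IsSmallPair

lemma two_mul_div_le (hxz : IsSmallPair ε r q d z₀ x z) (ht : t ≤ ε) : 2 * (t / d) ≤ q ^ 2 := by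
  rw [← mul_div_assoc, div_le_iff₀ hxz.d_pos, ← hxz.dist_add_eq]
  linarith [dist_nonneg (x := x) (y := z)]

lemma eps_le (hxz : IsSmallPair ε r q d z₀ x z) : ε ≤ d / 2 := by
  have hsmall := hxz.two_mul_div_le le_rfl
  have hq_sq : q ^ 2 ≤ 1 := pow_le_one₀ hxz.q_pos.le (by linarith [hxz.q_le])
  rw [← mul_div_assoc, div_le_iff₀ hxz.d_pos] at hsmall
  nlinarith [hxz.d_pos]

lemma abs_weightChange_le (hxz : IsSmallPair ε r q d z₀ x z) (ht : t ≤ ε) (hh : ‖h‖ ≤ t)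
    (hk : ‖k‖ ≤ t) : |weightChange r d z₀ x z h k| ≤ t / d := by
  have htr : t ≤ r := by
    have hdr : d ≤ r := hxz.ballWeight_eq ▸ ballWeight_le hxz.r_pos
    linarith [hxz.eps_le, hxz.d_pos]
  have hweight := abs_ballWeight_add_sub_le hxz.r_pos (hxz.ballWeight_eq ▸ hxz.d_pos)
    (norm_midpoint_le hh hk) htr
  rw [hxz.ballWeight_eq] at hweight
  rw [weightChange, midpoint_add_add, abs_div, abs_of_pos hxz.d_pos]
  exact div_le_div_of_nonneg_right hweight hxz.d_pos.le

lemma neg_sq_le_weightChange_add (hxz : IsSmallPair ε r q d z₀ x z) (hh : ‖h‖ ≤ t)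
    (hk : ‖k‖ ≤ t) :
    -(t / d) ^ 2 ≤ weightChange r d z₀ x z h k + weightChange r d z₀ x z (-h) (-k) := by
  have hweight := neg_sq_div_le_ballWeight_add_sub_add hxz.r_pos
    (hxz.ballWeight_eq ▸ hxz.d_pos) (norm_midpoint_le hh hk)
  rw [hxz.ballWeight_eq] at hweight
  rw [weightChange, weightChange, midpoint_add_add, midpoint_add_add, midpoint_neg_neg, ← add_div,
    le_div_iff₀ hxz.d_pos]
  refine hweight.trans' (le_of_eq ?_)
  have hd := hxz.d_pos.ne'
  field_simp

lemma ballWeight_pos (hxz : IsSmallPair ε r q d z₀ x z) (hh : ‖h‖ ≤ ε) (hk : ‖k‖ ≤ ε) :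
    0 < ballWeight r z₀ (midpoint ℝ (x + h) (z + k)) := by
  have hchange := (abs_le.1 (hxz.abs_weightChange_le le_rfl hh hk)).1
  rw [weightChange, ← neg_div, div_le_div_iff_of_pos_right hxz.d_pos] at hchange
  linarith [hxz.eps_le, hxz.d_pos]

lemma ratioPerturbation (hxz : IsSmallPair ε r q d z₀ x z) (ht : t ≤ ε) (hh : ‖h‖ ≤ t)
    (hk : ‖k‖ ≤ t) :
    RatioPerturbation q (t / d) (distChange d x z h k) (weightChange r d z₀ x z h k)
      (relDist ε r z₀ (x + h) (z + k)) where
  q_pos := hxz.q_pos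
  q_le := hxz.q_le
  two_mul_le := hxz.two_mul_div_le ht
  abs_num_le := abs_distChange_le hxz.d_pos.le hh hk
  abs_den_le := hxz.abs_weightChange_le ht hh hk
  mul_one_add_eq := by
    have hd := hxz.d_pos.ne'
    have hw := (hxz.ballWeight_pos (hh.trans ht) (hk.trans ht)).ne'
    rw [relDist, weightChange, distChange, eq_sub_of_add_eq hxz.dist_add_eq]
    field_simp
    ring

lemma sub_le (hxz : IsSmallPair ε r q d z₀ x z) (hu : PairBound u A ε r q₀ z₀ K) (hq : q ≤ q₀)
    (hh : ‖h‖ ≤ ε) (hk : ‖k‖ ≤ ε) :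
    u (x + h) - u (z + k) ≤ K + A * concaveGauge (relDist ε r z₀ (x + h) (z + k)) := by
  refine hu _ _ (hxz.ballWeight_pos hh hk) ((hxz.ratioPerturbation le_rfl hh hk).mem_Icc.2.trans ?_)
  have hq_pos := hxz.q_pos
  gcongr

lemma exists_relDist_toward_eq (hxz : IsSmallPair ε r q d z₀ x z) (ht : 0 < t)
    (hfar : 2 * t ≤ dist x z) :
    ∃ h : E, ‖h‖ = t ∧ relDist ε r z₀ (x + h) (z + -h) = q ^ 2 - 2 * (t / d) := by
  have hs : 0 < dist x z := by linarith
  refine ⟨(t / dist x z) • (z - x), ?_, ?_⟩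
  · rw [norm_smul, ← dist_eq_norm, dist_comm z x, Real.norm_of_nonneg (by positivity),
      div_mul_cancel₀ _ hs.ne']
  · have hscale : x + (t / dist x z) • (z - x) - (z + -((t / dist x z) • (z - x)))
        = (1 - 2 * t / dist x z) • (x - z) := by module
    have hscale_nonneg : 0 ≤ 1 - 2 * t / dist x z := sub_nonneg.2 ((div_le_one hs).2 hfar)
    have hd := hxz.d_pos.ne'
    rw [relDist, midpoint_add_add, midpoint_self_neg, add_zero, hxz.ballWeight_eq, dist_eq_norm,
      hscale, norm_smul, Real.norm_of_nonneg hscale_nonneg, ← dist_eq_norm, sub_mul, one_mul,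
      div_mul_cancel₀ _ hs.ne', eq_sub_of_add_eq hxz.dist_add_eq]
    field_simp
    ring

lemma exists_toward (hxz : IsSmallPair ε r q d z₀ x z) (hu : PairBound u A ε r q₀ z₀ K)
    (hq : q ≤ q₀) (hK : 0 ≤ K) (hA : 0 ≤ A) (ht : t ∈ Ioo 0 ε) :
    ∃ h' k', ‖h'‖ ≤ t ∧ ‖k'‖ ≤ t ∧
      u (x + h') - u (z + k') ≤ K + A * concaveGauge (q ^ 2 - 2 * (t / d)) := by
  rcases le_or_gt (2 * t) (dist x z) with hfar | hnear
  · obtain ⟨h, hh, hrel⟩ := hxz.exists_relDist_toward_eq ht.1 hfar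
    have hh_neg : ‖-h‖ = t := (norm_neg h).trans hh
    refine ⟨h, -h, hh.le, hh_neg.le, hrel ▸ ?_⟩
    exact hxz.sub_le hu hq (hh.trans_le ht.2.le) (hh_neg.trans_le ht.2.le)
  · refine ⟨midpoint ℝ x z - x, midpoint ℝ x z - z, ?_, ?_, ?_⟩
    · rw [← dist_eq_norm, dist_midpoint_left, Real.norm_two, inv_mul_le_iff₀ two_pos]
      exact hnear.le
    · rw [← dist_eq_norm, dist_midpoint_right, Real.norm_two, inv_mul_le_iff₀ two_pos]
      exact hnear.le
    · rw [add_sub_cancel, add_sub_cancel, sub_self]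
      have hgauge : 0 ≤ concaveGauge (q ^ 2 - 2 * (t / d)) := by
        have ht_div : 0 ≤ t / d := div_nonneg ht.1.le hxz.d_pos.le
        exact concaveGauge_nonneg (by linarith [hxz.two_mul_div_le ht.2.le])
          (by nlinarith [hxz.q_pos, hxz.q_le])
      positivity

lemma add_le_of_opposite (hxz : IsSmallPair ε r q d z₀ x z) (hu : PairBound u A ε r q₀ z₀ K)
    (hq : q ≤ q₀) (hA : 0 ≤ A) (ht : t ≤ ε) (hh : ‖h‖ ≤ t) (hk : ‖k‖ ≤ t)
    (hsum : distChange d x z h k + distChange d x z (-h) (-k) ≤ (t / d) ^ 2 / (8 * q))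
    (hdiff : 3 * (t / d) ≤ |distChange d x z h k - distChange d x z (-h) (-k)|) :
    u (x + h) - u (z + k) + (u (x + -h) - u (z + -k))
      ≤ 2 * (K + A * (concaveGauge (q ^ 2) - (t / d) ^ 2 / (8 * q))) := by
  have hh_neg := (norm_neg h).trans_le hh
  have hk_neg := (norm_neg k).trans_le hk
  have hgauge := (hxz.ratioPerturbation ht hh hk).concaveGauge_add_le_of_opposite
    (hxz.ratioPerturbation ht hh_neg hk_neg) (hxz.neg_sq_le_weightChange_add hh hk) hsum hdiff
  have hmove := hxz.sub_le hu hq (hh.trans ht) (hk.trans ht)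
  have hmove_neg := hxz.sub_le hu hq (hh_neg.trans ht) (hk_neg.trans ht)
  have hhalf : (t / d) ^ 2 / (4 * q) = 2 * ((t / d) ^ 2 / (8 * q)) := by ring
  rw [hhalf] at hgauge
  linarith [mul_le_mul_of_nonneg_left hgauge hA]

lemma exists_add_le_of_toward {X : ℝ} (hxz : IsSmallPair ε r q d z₀ x z)
    (hu : PairBound u A ε r q₀ z₀ K) (hq : q ≤ q₀) (hK : 0 ≤ K) (hA : 0 ≤ A) (ht : t ∈ Ioo 0 ε)
    (hh : ‖h‖ ≤ t) (hk : ‖k‖ ≤ t) (hX : 0 ≤ X)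
    (hX' : distChange d x z h k + 4 * q ^ 2 * (t / d) ≤ 2 * (t / d) + X) :
    ∃ h' k', ‖h'‖ ≤ t ∧ ‖k'‖ ≤ t ∧ u (x + h) - u (z + k) + (u (x + h') - u (z + k'))
      ≤ 2 * (K + A * (concaveGauge (q ^ 2) + X / 2 - (t / d) ^ 2 / (8 * q))) := by
  obtain ⟨h', k', hh', hk', htoward⟩ := hxz.exists_toward hu hq hK hA ht
  refine ⟨h', k', hh', hk', ?_⟩
  have hq_pos := hxz.q_pos
  have hgauge := (hxz.ratioPerturbation ht.2.le hh hk).concaveGauge_add_le_of_toward hX hX'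
  have hmove := hxz.sub_le hu hq (hh.trans ht.2.le) (hk.trans ht.2.le)
  have hgain : (t / d) ^ 2 / (8 * q) ≤ (t / d) ^ 2 / q / 2 := by
    rw [div_div]
    exact div_le_div_of_nonneg_left (sq_nonneg _) (by positivity) (by linarith)
  linarith [mul_le_mul_of_nonneg_left hgauge hA, mul_le_mul_of_nonneg_left hgain hA]

lemma exists_response (hxz : IsSmallPair ε r q d z₀ x z) (hu : PairBound u A ε r q₀ z₀ K)
    (hq : q ≤ q₀) (hK : 0 ≤ K) (hA : 0 ≤ A) (ht : t ∈ Ioo 0 ε) (hh : ‖h‖ ≤ t) (hk : ‖k‖ ≤ t) :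
    ∃ h' k', ‖h'‖ ≤ t ∧ ‖k'‖ ≤ t ∧ u (x + h) - u (z + k) + (u (x + h') - u (z + k'))
      ≤ 2 * (K + A * (concaveGauge (q ^ 2) + 12 * (ε / d) ^ 2 - (t / d) ^ 2 / (8 * q))) := by
  have hd := hxz.d_pos
  have hε := hxz.eps_pos
  have hchange := abs_distChange_le (x := x) (z := z) hd.le hh hk
  rcases le_or_gt (4 * ε) (dist x z) with hfar | hnear
  · have hchange_neg := abs_distChange_le (x := x) (z := z) hd.le ((norm_neg h).trans_le hh)
      ((norm_neg k).trans_le hk)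
    have hloss : 0 ≤ A * (12 * (ε / d) ^ 2) := by positivity
    have hdist : q ^ 2 ≤ 2 * (dist x z / d) := by
      rw [← mul_div_assoc, le_div_iff₀ hd, ← hxz.dist_add_eq]
      linarith
    rcases parallelogram_dichotomy hxz.q_pos hxz.q_le (div_pos ht.1 hd)
      (by rw [← mul_div_assoc]; gcongr; linarith [ht.2]) hdist
      (sq_add_distChange_add_sq_le x z hh hk)
      ((abs_sub _ _).trans (by linarith)) with ⟨hsum, hdiff⟩ | hshort
    · refine ⟨-h, -k, (norm_neg h).trans_le hh, (norm_neg k).trans_le hk, ?_⟩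
      linarith [hxz.add_le_of_opposite hu hq hA ht.2.le hh hk hsum hdiff]
    · obtain ⟨h', k', hh', hk', hle⟩ := hxz.exists_add_le_of_toward hu hq hK hA ht hh hk le_rfl
        (hshort.trans_eq (add_zero _).symm)
      exact ⟨h', k', hh', hk', by linarith⟩
  · have hq_sq : q ^ 2 ≤ 6 * (ε / d) := by
      rw [← mul_div_assoc, le_div_iff₀ hd, ← hxz.dist_add_eq]
      linarith
    have hX : 4 * q ^ 2 * (t / d) ≤ 24 * (ε / d) ^ 2 := by
      calc 4 * q ^ 2 * (t / d) ≤ 4 * (6 * (ε / d)) * (ε / d) := by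
            gcongr
            exacts [(div_pos ht.1 hd).le, ht.2.le]
        _ = 24 * (ε / d) ^ 2 := by ring
    obtain ⟨h', k', hh', hk', hle⟩ := hxz.exists_add_le_of_toward hu hq hK hA ht hh hk
      (by positivity) (add_le_add ((le_abs_self _).trans hchange) hX)
    exact ⟨h', k', hh', hk', by linarith⟩

lemma add_le_of_parallel (hxz : IsSmallPair ε r q d z₀ x z) (hu : PairBound u A ε r q₀ z₀ K)
    (hq : q ≤ q₀) (hA : 0 ≤ A) (hh : ‖h‖ ≤ ε) :
    u (x + h) - u (z + h) + (u (x - h) - u (z - h))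
      ≤ 2 * (K + A * (concaveGauge (q ^ 2) + 12 * (ε / d) ^ 2)) := by
  have hh_neg := (norm_neg h).trans_le hh
  have hzero : ∀ k : E, distChange d x z k k = 0 := fun k ↦ by simp [distChange]
  have hratio := hxz.ratioPerturbation le_rfl hh hh
  have hratio_neg := hxz.ratioPerturbation le_rfl hh_neg hh_neg
  rw [hzero] at hratio hratio_neg
  have hgauge := hratio.concaveGauge_add_le_of_parallel hratio_neg
    (hxz.neg_sq_le_weightChange_add hh hh)
  have hmove := hxz.sub_le hu hq hh hh
  have hmove_neg := hxz.sub_le hu hq hh_neg hh_neg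
  rw [← sub_eq_add_neg, ← sub_eq_add_neg] at hmove_neg hgauge
  have hloss : 0 ≤ A * (ε / d) ^ 2 := by positivity
  linarith [mul_le_mul_of_nonneg_left hgauge hA]

end IsSmallPair

end SmallPair

section Estimate

variable {E : Type*} [NormedAddCommGroup E] [InnerProductSpace ℝ E] [MeasurableSpace E]
  [BorelSpace E] [ProperSpace E] {μ : Measure E} [μ.IsAddHaarMeasure]
  {α β A ε r q q₀ K M d : ℝ} {Ω : Set E} {u : E → ℝ} {z₀ x z : E}

lemma IsSmallPair.sub_le_sub (hxz : IsSmallPair ε r q d z₀ x z)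
    (hu : IsBoundedSolution μ α β ε M Ω u) (hx : x ∈ Ω) (hz : z ∈ Ω) (hα : 0 ≤ α) (hβ : 0 ≤ β)
    (hαβ : α + β = 1) (hpair : PairBound u A ε r q₀ z₀ K) (hq : q ≤ q₀) (hqα : q ≤ α / 512)
    (hK : 0 ≤ K) (hA : 0 ≤ A) :
    u x - u z ≤ K + A * concaveGauge (q ^ 2) - A * (ε / r) ^ 2 := by
  have hd := hxz.d_pos
  have hq_pos := hxz.q_pos
  have hε := hxz.eps_pos
  have hdr : d ≤ r := hxz.ballWeight_eq ▸ ballWeight_le hxz.r_pos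
  have hstep := hu.sub_le_of_forall_response hu hx hz hα hβ hαβ hε
    (a := A / (8 * q * d ^ 2)) (c := K + A * (concaveGauge (q ^ 2) + 12 * (ε / d) ^ 2))
    (fun t ht h k hh hk ↦ by
      obtain ⟨h', k', hh', hk', hle⟩ := hxz.exists_response hpair hq hK hA ht hh hk
      refine ⟨h', k', hh', hk', hle.trans_eq ?_⟩
      field_simp
      ring)
    (fun h hh ↦ hxz.add_le_of_parallel hpair hq hA hh.le)
  have hgain : 13 * (A * (ε / d) ^ 2) ≤ α * (A / (8 * q * d ^ 2)) * ε ^ 2 / 3 := by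
    calc 13 * (A * (ε / d) ^ 2) ≤ α / (24 * q) * (A * (ε / d) ^ 2) := by
          gcongr
          rw [le_div_iff₀ (by positivity)]
          linarith
      _ = α * (A / (8 * q * d ^ 2)) * ε ^ 2 / 3 := by
          field_simp
          ring
  have hscale : A * (ε / r) ^ 2 ≤ A * (ε / d) ^ 2 :=
    mul_le_mul_of_nonneg_left (pow_le_pow_left₀ (div_nonneg hε.le hxz.r_pos.le)
      (div_le_div_of_nonneg_left hε.le hd hdr) 2) hA
  linarith

lemma PairBound.max_sub (hpair : PairBound u A ε r (α / 512) z₀ K)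
    (hu : IsBoundedSolution μ α β ε M (ball z₀ (6 * r)) u) (hα : 0 < α) (hβ : 0 ≤ β)
    (hαβ : α + β = 1) (hε : 0 < ε) (hr : 0 < r) (hK : 0 ≤ K) (hA : 0 ≤ A)
    (hMA : 2 * M ≤ A * concaveGauge ((α / 512) ^ 2)) :
    PairBound u A ε r (α / 512) z₀ (max (K - A * (ε / r) ^ 2) 0) := by
  intro x z hw hσ
  have hq₀ : α / 512 ≤ 1 / 512 := by linarith
  have hσ_le : relDist ε r z₀ x z ≤ 4 / 9 := by nlinarith
  have hσ_pos := relDist_pos hε hw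
  obtain ⟨hx, hz⟩ := mem_ball_of_relDist_le_one hr hε.le hw (by linarith)
  rcases le_or_gt (relDist ε r z₀ x z) ((α / 512) ^ 2) with hsmall | hlarge
  · have hq : √(relDist ε r z₀ x z) ≤ α / 512 := (Real.sqrt_le_left (by positivity)).2 hsmall
    have hxz : IsSmallPair ε r (√(relDist ε r z₀ x z)) (ballWeight r z₀ (midpoint ℝ x z)) z₀ x z :=
      { eps_pos := hε
        r_pos := hr
        q_pos := Real.sqrt_pos.2 hσ_pos
        q_le := hq.trans hq₀
        d_pos := hw
        ballWeight_eq := rfl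
        dist_add_eq := by rw [Real.sq_sqrt hσ_pos.le, relDist, div_mul_cancel₀ _ hw.ne'] }
    have himprove := hxz.sub_le_sub hu hx hz hα.le hβ hαβ hpair hq hq hK hA
    rw [Real.sq_sqrt hσ_pos.le] at himprove
    linarith [le_max_left (K - A * (ε / r) ^ 2) 0]
  · have hgauge := mul_le_mul_of_nonneg_left
      (concaveGauge_mono (by positivity) hlarge.le hσ_le) hA
    linarith [hu.sub_le_two_mul hε hx hz, le_max_right (K - A * (ε / r) ^ 2) 0]

lemma IsBoundedSolution.pairBound_zero (hu : IsBoundedSolution μ α β ε M (ball z₀ (6 * r)) u)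
    (hα : 0 < α) (hβ : 0 ≤ β) (hαβ : α + β = 1) (hε : 0 < ε) (hr : 0 < r) (hA : 0 < A)
    (hMA : 2 * M ≤ A * concaveGauge ((α / 512) ^ 2)) : PairBound u A ε r (α / 512) z₀ 0 := by
  refine of_forall_max_sub (P := PairBound u A ε r (α / 512) z₀)
    (K := 2 * M) (δ := A * (ε / r) ^ 2) (by positivity) (fun x z hw hσ ↦ ?_)
    (fun K hK hpair ↦ hpair.max_sub hu hα hβ hαβ hε hr hK hA.le hMA)
  have hσ_le : relDist ε r z₀ x z ≤ 4 / 9 := by nlinarith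
  have hσ_nonneg := (relDist_pos hε hw).le
  obtain ⟨hx, hz⟩ := mem_ball_of_relDist_le_one hr hε.le hw (by linarith)
  linarith [hu.sub_le_two_mul hε hx hz, le_max_left (2 * M) 0,
    mul_nonneg hA.le (concaveGauge_nonneg hσ_nonneg hσ_le)]

lemma IsBoundedSolution.sub_le_mul_dist_add
    (hu : IsBoundedSolution μ α β ε M (ball z₀ (6 * r)) u) (hα : 0 < α) (hβ : 0 ≤ β)
    (hαβ : α + β = 1) (hε : 0 < ε) (hr : 0 < r) (hA : 0 < A)
    (hMA : 2 * M ≤ A * concaveGauge ((α / 512) ^ 2)) (hx : x ∈ ball z₀ r) (hz : z ∈ ball z₀ r) :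
    u x - u z ≤ 4 * A / r * dist x z + 4 * A / r * ε := by
  have hweight : r / 2 ≤ ballWeight r z₀ (midpoint ℝ x z) :=
    half_le_ballWeight hr (mem_ball_iff_norm.1 ((convex_ball z₀ r).midpoint_mem hx hz)).le
  have hw : 0 < ballWeight r z₀ (midpoint ℝ x z) := by linarith
  have hσ_nonneg := (relDist_pos hε hw).le
  have hgauge : u x - u z ≤ A * relDist ε r z₀ x z := by
    rcases le_or_gt (relDist ε r z₀ x z) (4 * (α / 512) ^ 2) with hsmall | hlarge
    · calc u x - u z ≤ 0 + A * concaveGauge (relDist ε r z₀ x z) :=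
            hu.pairBound_zero hα hβ hαβ hε hr hA hMA x z hw hsmall
        _ ≤ A * relDist ε r z₀ x z := by
            rw [zero_add]
            exact mul_le_mul_of_nonneg_left (concaveGauge_le_self hσ_nonneg) hA.le
    · have hsub : ball z₀ r ⊆ ball z₀ (6 * r) := ball_subset_ball (by linarith)
      calc u x - u z ≤ 2 * M := hu.sub_le_two_mul hε (hsub hx) (hsub hz)
        _ ≤ A * concaveGauge ((α / 512) ^ 2) := hMA
        _ ≤ A * relDist ε r z₀ x z := by
            gcongr
            linarith [concaveGauge_le_self (sq_nonneg (α / 512)), sq_nonneg (α / 512)]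
  calc u x - u z ≤ A * relDist ε r z₀ x z := hgauge
    _ ≤ A * ((dist x z + 2 * ε) / (r / 2)) := by
        rw [relDist]
        gcongr
    _ = 2 * A / r * dist x z + 4 * A / r * ε := by
        field_simp
        ring
    _ ≤ 4 * A / r * dist x z + 4 * A / r * ε := by
        gcongr
        norm_num

end Estimate

theorem rough_lipschitz_estimate_general {E : Type*} [NormedAddCommGroup E]
    [InnerProductSpace ℝ E] [FiniteDimensional ℝ E] [MeasurableSpace E] [BorelSpace E]
    (μ : Measure E) [μ.IsAddHaarMeasure] {α β r : ℝ} (M : ℝ) (hα : 0 < α) (hβ : 0 ≤ β)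
    (hαβ : α + β = 1) (hr : 0 < r) :
    ∃ C : ℝ, 0 < C ∧ ∀ Ω : Set E, Bornology.IsBounded Ω → ∀ ε : ℝ, 0 < ε → ∀ (u : E → ℝ) (M' : ℝ),
      IsBoundedSolution μ α β ε M' Ω u → (∀ y ∈ thickening ε Ω \ Ω, |u y| ≤ M) →
      ∀ z₀ : E, ball z₀ (6 * r) ⊆ Ω → ∀ x ∈ ball z₀ r, ∀ y ∈ ball z₀ r,
        |u x - u y| ≤ C * dist x y + C * ε := by
  have hgauge : 0 < concaveGauge ((α / 512) ^ 2) := by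
    rw [concaveGauge_sq (by positivity)]
    nlinarith [pow_pos hα 2]
  obtain ⟨A, hA, hMA⟩ : ∃ A, 0 < A ∧ 2 * M ≤ A * concaveGauge ((α / 512) ^ 2) := by
    refine ⟨(2 * |M| + 1) / concaveGauge ((α / 512) ^ 2), by positivity, ?_⟩
    rw [div_mul_cancel₀ _ hgauge.ne']
    linarith [le_abs_self M]
  refine ⟨4 * A / r, by positivity, fun Ω hΩ ε hε u M' hu hM z₀ hz₀ x hx y hy ↦ ?_⟩
  rcases subsingleton_or_nontrivial E with _ | _
  · rw [Subsingleton.elim x y, sub_self, abs_zero]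
    positivity
  have hball := (hu.of_abs_le_diff hΩ hα hβ hαβ hε hM).mono hz₀
  refine abs_sub_le_iff.2 ⟨hball.sub_le_mul_dist_add hα hβ hαβ hε hr hA hMA hx hy, ?_⟩
  rw [dist_comm]
  exact hball.sub_le_mul_dist_add hα hβ hαβ hε hr hA hMA hy hx

/-- **Rough Lipschitz estimate (Lemma 3.1).** For every `p > 2`, integer `n ≥ 2`, `r > 0`
and `M ≥ 0` there exists `C > 0` depending only on `p, n, r, M` such that: whenever
`ε ∈ (0,1)` with `ε < r`, `F` is bounded Borel on `Γ_ε` with `sup |F| ≤ M`, and `u` is a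
bounded Borel function on `Ω_ε` satisfying the DPP on `Ω` with `u = F` on `Γ_ε`, then for
every `z₀` with `B_{6r}(z₀) ⊆ Ω` and all `x, y ∈ B_r(z₀)`:
`|u(x) − u(y)| ≤ C|x − y| + Cε`. -/
theorem rough_lipschitz_estimate (n : ℕ) (hn : 2 ≤ n) (p r M : ℝ)
    (hp : 2 < p) (hr : 0 < r) (hM : 0 ≤ M) :
    ∃ C : ℝ, 0 < C ∧
      ∀ (Ω : Set (EuclideanSpace ℝ (Fin n))),
        IsOpen Ω → IsConnected Ω → Bornology.IsBounded Ω →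
      ∀ ε : ℝ, ε ∈ Set.Ioo (0 : ℝ) 1 → ε < r →
      ∀ F u : EuclideanSpace ℝ (Fin n) → ℝ,
        Measurable F →
        (∀ x ∈ {x | x ∉ Ω ∧ Metric.infDist x (frontier Ω) ≤ ε}, |F x| ≤ M) →
        Measurable u →
        (∃ M', ∀ x ∈ Ω ∪ {x | x ∉ Ω ∧ Metric.infDist x (frontier Ω) ≤ ε}, |u x| ≤ M') →
        (∀ x ∈ {x | x ∉ Ω ∧ Metric.infDist x (frontier Ω) ≤ ε}, u x = F x) →
        (∀ x ∈ Ω, u x =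
          ((p - 2) / (n + p)) / (2 * ε) *
              (∫ t in (0 : ℝ)..ε, (sSup (u '' Metric.ball x t) + sInf (u '' Metric.ball x t)))
            + ((n + 2) / (n + p)) * ⨍ z in Metric.ball x ε, u z) →
      ∀ z₀ : EuclideanSpace ℝ (Fin n), Metric.ball z₀ (6 * r) ⊆ Ω →
      ∀ x ∈ Metric.ball z₀ r, ∀ y ∈ Metric.ball z₀ r,
        |u x - u y| ≤ C * dist x y + C * ε := by
  have hnp : (0 : ℝ) < n + p := by positivity
  obtain ⟨C, hC, estimate⟩ := rough_lipschitz_estimate_general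
    (volume : Measure (EuclideanSpace ℝ (Fin n))) (α := (p - 2) / (n + p))
    (β := (n + 2) / (n + p)) M (div_pos (by linarith) hnp) (by positivity)
    (by rw [← add_div, div_eq_one_iff_eq hnp.ne']; ring) hr
  refine ⟨C, hC, fun Ω _ _ hΩ ε hε _ F u _ hF hu ⟨M', hM'⟩ huF hdpp ↦ ?_⟩
  have hstrip := thickening_subset_union_infDist_frontier_le ε Ω
  refine estimate Ω hΩ ε hε.1 u M' ⟨hu, fun y hy ↦ hM' y (hstrip hy), hdpp⟩ fun y hy ↦ ?_
  have hy_strip := (hstrip hy.1).resolve_left hy.2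
  exact huF y hy_strip ▸ hF y hy_strip
end

section
/- Uniform Lipschitz estimate (Theorem 3.2, first part): for every p > 2, integer n ≥ 2, r > 0 and M ≥ 0 there exists a constant C > 0 (depending only on p, n, r and M) such that the following holds. Let ε ∈ (0,1) with ε < r, and let u be a bounded Borel function on Ω_ε with sup_{Ω_ε}|u| ≤ M satisfying the DPP at every point of Ω. Then for every z₀ with B_{5r}(z₀) ⊂ Ω and all x, y ∈ B_{2r}(z₀): |u(x) − u(y)| ≤ C|x − y|. -/
open MeasureTheory Metric Set

/-!
Let `U (c, s)` be the oscillation of `u` over the ball of radius `s` around `c`. Subtract the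
dynamic programming principles at two points `x` and `y` of that ball: the supremum over the
`t`-ball around `x` minus the infimum over the one around `y` is at most `U (c, s + t)`, and the
infimum minus the supremum is at most `U (c, s - t)`. Hence `U` is a subsolution of the linear
operator that averages `s` over `(s - ε, s + ε)` with weight `α` and `c` over a ball of radius `ε`
with weight `β`. Functions convex in `c` and sufficiently concave in `s` are strict supersolutions,
and a quadratic one of this kind which dominates `U` near the boundary gives
`U (c, s) ≤ L * (s + ε)`.

This is the Lipschitz bound at distances larger than `ε`. At smaller distances the dynamic
programming principle itself regularises: the averages of `u` over the balls of radius `ε` around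
`x` and `y` differ only through a set of relative measure `O(|x - y| / ε)`, on which `u` oscillates
by `O(ε)`, and the extremal values are treated alike by shifting the radius by `|x - y|`.
-/

section RealSets

variable {A B S : Set ℝ}

lemma csSup_sub_csInf_le_diam (hA : A.Nonempty) (hB : B.Nonempty) (hAS : A ⊆ S) (hBS : B ⊆ S)
    (hS : Bornology.IsBounded S) : sSup A - sInf B ≤ diam S := by
  rw [Real.diam_eq hS]
  exact sub_le_sub (csSup_le_csSup hS.bddAbove hA hAS) (csInf_le_csInf hS.bddBelow hB hBS)

lemma csInf_sub_csSup_le_sub {a b : ℝ} (hA : BddBelow A) (hB : BddAbove B) (ha : a ∈ A)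
    (hb : b ∈ B) : sInf A - sSup B ≤ a - b :=
  sub_le_sub (csInf_le hA ha) (le_csSup hB hb)

lemma abs_csSup_le {M : ℝ} (hA : A.Nonempty) (h : ∀ a ∈ A, |a| ≤ M) : |sSup A| ≤ M := by
  have hA' : BddAbove A := ⟨M, fun a ha => (abs_le.1 (h a ha)).2⟩
  obtain ⟨a, ha⟩ := hA
  exact abs_le.2 ⟨le_csSup_of_le hA' ha (abs_le.1 (h a ha)).1,
    csSup_le ⟨a, ha⟩ fun b hb => (abs_le.1 (h b hb)).2⟩

lemma neg_image_eq_neg {X : Type*} (v : X → ℝ) (s : Set X) : (-v) '' s = -(v '' s) := by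
  rw [← image_neg_eq_neg, image_image]
  rfl

lemma isBounded_range_neg {X : Type*} {v : X → ℝ} (hv : Bornology.IsBounded (range v)) :
    Bornology.IsBounded (range (-v)) := by
  simpa only [← image_univ, neg_image_eq_neg] using hv.neg

end RealSets

section Oscillation

variable {X Y : Type*} [PseudoMetricSpace X] [PseudoMetricSpace Y] {v : X → Y} {c x y : X} {s : ℝ}

/-- The oscillation of `v` over the open ball of radius `s` around `c`. For `s ≤ 0` the ball is
empty and the oscillation is `0`. -/
noncomputable def ballOsc (v : X → Y) (c : X) (s : ℝ) : ℝ :=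
  diam (v '' ball c s)

lemma ballOsc_nonneg : 0 ≤ ballOsc v c s :=
  diam_nonneg

lemma ballOsc_of_nonpos (hs : s ≤ 0) : ballOsc v c s = 0 := by
  simp [ballOsc, ball_eq_empty.2 hs]

lemma ballOsc_le {K : ℝ} (hK : 0 ≤ K) (h : ∀ x ∈ ball c s, ∀ y ∈ ball c s, dist (v x) (v y) ≤ K) :
    ballOsc v c s ≤ K :=
  diam_le_of_forall_dist_le hK <| by
    rintro _ ⟨x, hx, rfl⟩ _ ⟨y, hy, rfl⟩
    exact h x hx y hy

lemma dist_le_ballOsc (hv : Bornology.IsBounded (range v)) (hx : x ∈ ball c s)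
    (hy : y ∈ ball c s) : dist (v x) (v y) ≤ ballOsc v c s :=
  dist_le_diam_of_mem (hv.subset (image_subset_range _ _)) (mem_image_of_mem v hx)
    (mem_image_of_mem v hy)

lemma ballOsc_le_diam_range (hv : Bornology.IsBounded (range v)) (c : X) (s : ℝ) :
    ballOsc v c s ≤ diam (range v) :=
  diam_mono (image_subset_range _ _) hv

lemma monotone_ballOsc (hv : Bornology.IsBounded (range v)) (c : X) : Monotone (ballOsc v c) :=
  fun _ _ h => diam_mono (image_mono (ball_subset_ball h)) (hv.subset (image_subset_range _ _))

lemma lowerSemicontinuous_ballOsc (hv : Bornology.IsBounded (range v)) :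
    LowerSemicontinuous fun p : X × ℝ => ballOsc v p.1 p.2 := by
  rintro ⟨c, s⟩ K hK
  rcases lt_or_ge K 0 with hK0 | hK0
  · exact .of_forall fun p => hK0.trans_le ballOsc_nonneg
  · obtain ⟨x, hx, y, hy, hxy⟩ : ∃ x ∈ ball c s, ∃ y ∈ ball c s, K < dist (v x) (v y) := by
      by_contra! h
      exact hK.not_ge (ballOsc_le hK0 h)
    have mem_ball_nhds : ∀ z ∈ ball c s, ∀ᶠ p : X × ℝ in nhds (c, s), z ∈ ball p.1 p.2 :=
      fun z hz => (isOpen_lt (f := fun p : X × ℝ => dist z p.1) (g := Prod.snd)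
        (by fun_prop) (by fun_prop)).mem_nhds hz
    filter_upwards [mem_ball_nhds x hx, mem_ball_nhds y hy] with p hpx hpy
    exact hxy.trans_le (dist_le_ballOsc hv hpx hpy)

end Oscillation

section RealOscillation

variable {X : Type*} [PseudoMetricSpace X] {v : X → ℝ} {c x y : X} {s t b : ℝ}

lemma sub_le_ballOsc (hv : Bornology.IsBounded (range v)) (hx : x ∈ ball c s) (hy : y ∈ ball c s) :
    v x - v y ≤ ballOsc v c s :=
  (le_abs_self _).trans (dist_le_ballOsc hv hx hy)

lemma ballOsc_neg : ballOsc (-v) c s = ballOsc v c s := by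
  rw [ballOsc, neg_image_eq_neg, ← image_neg_eq_neg]
  exact (IsometryEquiv.neg ℝ).isometry.diam_image _

lemma intervalIntegrable_ballOsc (hv : Bornology.IsBounded (range v)) (c : X) (a b : ℝ) :
    IntervalIntegrable (ballOsc v c) volume a b :=
  (monotone_ballOsc hv c).intervalIntegrable

lemma sSup_ball_sub_sInf_ball_le_ballOsc (hv : Bornology.IsBounded (range v)) (hx : x ∈ ball c s)
    (hy : y ∈ ball c s) (ht : 0 < t) :
    sSup (v '' ball x t) - sInf (v '' ball y t) ≤ ballOsc v c (s + t) := by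
  have image_subset : ∀ z ∈ ball c s, v '' ball z t ⊆ v '' ball c (s + t) := fun z hz =>
    image_mono (ball_subset_ball' (by linarith [mem_ball.1 hz]))
  exact csSup_sub_csInf_le_diam ((nonempty_ball.2 ht).image v) ((nonempty_ball.2 ht).image v)
    (image_subset x hx) (image_subset y hy) (hv.subset (image_subset_range _ _))

lemma monotoneOn_sSup_image_ball (hv : Bornology.IsBounded (range v)) (x : X) :
    MonotoneOn (fun t => sSup (v '' ball x t)) (Ioi 0) := fun _ hs _ _ hst =>
  csSup_le_csSup (hv.subset (image_subset_range _ _)).bddAbove ((nonempty_ball.2 hs).image v)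
    (image_mono (ball_subset_ball hst))

lemma intervalIntegrable_sSup_image_ball_s5 (hv : Bornology.IsBounded (range v)) (x : X)
    (hb : 0 ≤ b) : IntervalIntegrable (fun t => sSup (v '' ball x t)) volume 0 b := by
  rw [intervalIntegrable_iff_integrableOn_Ioo_of_le hb]
  obtain ⟨M, hM⟩ := isBounded_iff_forall_norm_le.1 hv
  refine IntegrableOn.of_bound measure_Ioo_lt_top ?_ M ?_
  · exact (aemeasurable_restrict_of_monotoneOn measurableSet_Ioo
      ((monotoneOn_sSup_image_ball hv x).mono Ioo_subset_Ioi_self)).aestronglyMeasurable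
  · filter_upwards [ae_restrict_mem measurableSet_Ioo] with t ht
    exact abs_csSup_le ((nonempty_ball.2 ht.1).image v) fun a ha =>
      hM a (image_subset_range _ _ ha)

lemma intervalIntegrable_sInf_image_ball_s5 (hv : Bornology.IsBounded (range v)) (x : X)
    (hb : 0 ≤ b) : IntervalIntegrable (fun t => sInf (v '' ball x t)) volume 0 b := by
  have h := (intervalIntegrable_sSup_image_ball_s5 (isBounded_range_neg hv) x hb).neg
  simp only [neg_image_eq_neg, Real.sSup_neg] at h
  simpa only [Pi.neg_def, neg_neg] using h

end RealOscillation

section NormedOscillation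

variable {E : Type*} [SeminormedAddCommGroup E] [NormedSpace ℝ E] {v : E → ℝ} {c x y : E}
  {s t ε : ℝ}

/-- If `t < s`, both balls of radius `t` meet `ball c (s - t)`; otherwise both contain `c`. -/
lemma sInf_ball_sub_sSup_ball_le_ballOsc (hv : Bornology.IsBounded (range v)) (hx : x ∈ ball c s)
    (hy : y ∈ ball c s) (ht : 0 < t) :
    sInf (v '' ball x t) - sSup (v '' ball y t) ≤ ballOsc v c (s - t) := by
  have hv' (z : E) : Bornology.IsBounded (v '' ball z t) := hv.subset (image_subset_range _ _)
  have sub_le {x' y' : E} (hx' : x' ∈ ball x t) (hy' : y' ∈ ball y t) :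
      sInf (v '' ball x t) - sSup (v '' ball y t) ≤ v x' - v y' :=
    csInf_sub_csSup_le_sub (hv' x).bddBelow (hv' y).bddAbove (mem_image_of_mem v hx')
      (mem_image_of_mem v hy')
  rcases le_or_gt s t with hst | hst
  · calc sInf (v '' ball x t) - sSup (v '' ball y t)
      _ ≤ v c - v c := sub_le (mem_ball_comm.1 (ball_subset_ball hst hx))
          (mem_ball_comm.1 (ball_subset_ball hst hy))
      _ ≤ ballOsc v c (s - t) := (sub_self _).trans_le ballOsc_nonneg
  · have exists_mem {z : E} (hz : z ∈ ball c s) : ∃ w ∈ ball z t, w ∈ ball c (s - t) := by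
      obtain ⟨w, hzw, hwc⟩ := exists_dist_lt_lt ht (sub_pos.2 hst)
        ((mem_ball.1 hz).trans_eq (sub_add_cancel s t).symm)
      exact ⟨w, mem_ball'.2 hzw, hwc⟩
    obtain ⟨x', hx', hx'c⟩ := exists_mem hx
    obtain ⟨y', hy', hy'c⟩ := exists_mem hy
    exact (sub_le hx' hy').trans (sub_le_ballOsc hv hx'c hy'c)

lemma integral_sSup_add_sInf_sub_le_integral_ballOsc (hε : 0 ≤ ε)
    (hv : Bornology.IsBounded (range v)) (hx : x ∈ ball c s) (hy : y ∈ ball c s) :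
    (∫ t in (0 : ℝ)..ε, (sSup (v '' ball x t) + sInf (v '' ball x t)))
        - ∫ t in (0 : ℝ)..ε, (sSup (v '' ball y t) + sInf (v '' ball y t))
      ≤ ∫ t in (0 : ℝ)..ε, (ballOsc v c (s + t) + ballOsc v c (s - t)) := by
  have integrable_add (z : E) := (intervalIntegrable_sSup_image_ball_s5 hv z hε).add
    (intervalIntegrable_sInf_image_ball_s5 hv z hε)
  have integrable_osc : IntervalIntegrable (fun t => ballOsc v c (s + t) + ballOsc v c (s - t))
      volume 0 ε := by
    refine .add ?_ ?_
    · simpa using (intervalIntegrable_ballOsc hv c s (s + ε)).comp_add_left s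
    · simpa using (intervalIntegrable_ballOsc hv c s (s - ε)).comp_sub_left s
  rw [← intervalIntegral.integral_sub (integrable_add x) (integrable_add y)]
  refine intervalIntegral.integral_mono_on_of_le_Ioo hε ((integrable_add x).sub (integrable_add y))
    integrable_osc fun t ht => ?_
  linarith [sSup_ball_sub_sInf_ball_le_ballOsc hv hx hy ht.1,
    sInf_ball_sub_sSup_ball_le_ballOsc hv hx hy ht.1]

end NormedOscillation

section Averages

variable {X : Type*} [MeasurableSpace X] {μ : Measure X} {S : Set X} {f g : X → ℝ}

lemma setAverage_mono (hS : MeasurableSet S) (hf : IntegrableOn f S μ) (hg : IntegrableOn g S μ)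
    (h : ∀ x ∈ S, f x ≤ g x) : ⨍ x in S, f x ∂μ ≤ ⨍ x in S, g x ∂μ := by
  rw [setAverage_eq, setAverage_eq]
  exact smul_le_smul_of_nonneg_left (setIntegral_mono_on hf hg hS h) (by positivity)

lemma setAverage_add (hf : IntegrableOn f S μ) (hg : IntegrableOn g S μ) :
    ⨍ x in S, (f x + g x) ∂μ = (⨍ x in S, f x ∂μ) + ⨍ x in S, g x ∂μ :=
  integral_add hf.to_average hg.to_average

lemma setAverage_sub_s5 (hf : IntegrableOn f S μ) (hg : IntegrableOn g S μ) :
    ⨍ x in S, (f x - g x) ∂μ = (⨍ x in S, f x ∂μ) - ⨍ x in S, g x ∂μ :=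
  integral_sub hf.to_average hg.to_average

lemma setAverage_const_mul (a : ℝ) : ⨍ x in S, a * f x ∂μ = a * ⨍ x in S, f x ∂μ :=
  integral_const_mul a f

lemma setAverage_add_const (hf : IntegrableOn f S μ) (h0 : μ S ≠ 0) (htop : μ S ≠ ⊤) (k : ℝ) :
    ⨍ x in S, (f x + k) ∂μ = (⨍ x in S, f x ∂μ) + k := by
  rw [setAverage_add hf (integrableOn_const htop), setAverage_const h0 htop]

lemma integrableOn_ball_of_isBounded_range [PseudoMetricSpace X] [ProperSpace X]
    [IsFiniteMeasureOnCompacts μ] (hf : Measurable f) (hf' : Bornology.IsBounded (range f)) (x : X)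
    (ρ : ℝ) : IntegrableOn f (ball x ρ) μ := by
  obtain ⟨M, hM⟩ := isBounded_iff_forall_norm_le.1 hf'
  exact .of_bound measure_ball_lt_top hf.aestronglyMeasurable M
    (.of_forall fun z => hM _ (mem_range_self z))

lemma integrableOn_ball_of_continuous [MetricSpace X] [ProperSpace X]
    [OpensMeasurableSpace X] [IsFiniteMeasureOnCompacts μ] (hf : Continuous f) (x : X) (ρ : ℝ) :
    IntegrableOn f (ball x ρ) μ :=
  (hf.continuousOn.integrableOn_compact (isCompact_closedBall x ρ)).mono_set ball_subset_closedBall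

lemma setAverage_ball_zero_add {E : Type*} [NormedAddCommGroup E] [MeasurableSpace E]
    [BorelSpace E] (μ : Measure E) [μ.IsAddHaarMeasure] (f : E → ℝ) (x : E) (ρ : ℝ) :
    ⨍ h in ball 0 ρ, f (x + h) ∂μ = ⨍ z in ball x ρ, f z ∂μ := by
  have h := (measurePreserving_add_left μ x).setIntegral_preimage_emb
    (measurableEmbedding_addLeft x) f (ball x ρ)
  rw [preimage_add_left_ball, neg_add_cancel] at h
  rw [setAverage_eq, setAverage_eq, h, Measure.addHaar_real_ball_center μ x]

lemma setAverage_ball_zero_real {f : ℝ → ℝ} {ρ : ℝ} (hρ : 0 < ρ) (hf : IntegrableOn f (ball 0 ρ)) :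
    ⨍ t in ball (0 : ℝ) ρ, f t = 1 / (2 * ρ) * ∫ t in (0 : ℝ)..ρ, (f t + f (-t)) := by
  rw [Real.ball_eq_Ioo, zero_sub, zero_add] at hf ⊢
  have hf' : IntervalIntegrable f volume (-ρ) ρ :=
    (intervalIntegrable_iff_integrableOn_Ioo_of_le (by linarith)).2 hf
  have hneg : IntervalIntegrable f volume (-ρ) 0 :=
    hf'.mono_set (uIcc_subset_uIcc_left (by simp [hρ.le]))
  have hpos : IntervalIntegrable f volume 0 ρ :=
    hf'.mono_set (uIcc_subset_uIcc_right (by simp [hρ.le]))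
  have hneg' : IntervalIntegrable (fun t => f (-t)) volume 0 ρ := by
    simpa only [neg_zero, neg_neg] using
      ((IntervalIntegrable.iff_comp_neg (by finiteness)).1 hneg).symm
  rw [intervalIntegral.integral_add hpos hneg', intervalIntegral.integral_comp_neg, neg_zero,
    add_comm (∫ t in (0 : ℝ)..ρ, f t), intervalIntegral.integral_add_adjacent_intervals hneg hpos,
    intervalIntegral.integral_of_le (by linarith), integral_Ioc_eq_integral_Ioo, setAverage_eq,
    Real.volume_real_Ioo_of_le (by linarith), smul_eq_mul]
  ring

end Averages

section MeanOperator

variable {E : Type*} [NormedAddCommGroup E] [MeasurableSpace E] {μ : Measure E}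
  {α β ε : ℝ} {F G : E → ℝ → ℝ} {c : E} {s : ℝ}

/-- The averaging operator on functions of a ball `(c, s)`: with weight `α` the radius is averaged
over `(s - ε, s + ε)`, with weight `β` the centre is averaged over `ball c ε`. -/
noncomputable def meanOp (μ : Measure E) (α β ε : ℝ) (F : E → ℝ → ℝ) (c : E) (s : ℝ) : ℝ :=
  α * (⨍ t in ball (0 : ℝ) ε, F c (s + t)) + β * ⨍ h in ball (0 : E) ε, F (c + h) s ∂μ

/-- Integrability of the two averages in `meanOp`. -/
structure MeanIntegrable (μ : Measure E) (ε : ℝ) (F : E → ℝ → ℝ) (c : E) (s : ℝ) : Prop where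
  radius : IntegrableOn (fun t => F c (s + t)) (ball (0 : ℝ) ε)
  center : IntegrableOn (fun h => F (c + h) s) (ball (0 : E) ε) μ

lemma meanOp_nonneg (hα : 0 ≤ α) (hβ : 0 ≤ β) (hF : ∀ c s, 0 ≤ F c s) :
    0 ≤ meanOp μ α β ε F c s :=
  add_nonneg (mul_nonneg hα (integral_nonneg fun _ => hF _ _))
    (mul_nonneg hβ (integral_nonneg fun _ => hF _ _))

lemma meanOp_mono [OpensMeasurableSpace E] (hα : 0 ≤ α) (hβ : 0 ≤ β)
    (hF : MeanIntegrable μ ε F c s) (hG : MeanIntegrable μ ε G c s)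
    (hradius : ∀ t ∈ ball (0 : ℝ) ε, F c (s + t) ≤ G c (s + t))
    (hcenter : ∀ h ∈ ball (0 : E) ε, F (c + h) s ≤ G (c + h) s) :
    meanOp μ α β ε F c s ≤ meanOp μ α β ε G c s :=
  add_le_add
    (mul_le_mul_of_nonneg_left (setAverage_mono measurableSet_ball hF.radius hG.radius hradius) hα)
    (mul_le_mul_of_nonneg_left (setAverage_mono measurableSet_ball hF.center hG.center hcenter) hβ)

variable [ProperSpace E] [IsFiniteMeasureOnCompacts μ]

lemma MeanIntegrable.add_const (hF : MeanIntegrable μ ε F c s) (k : ℝ) :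
    MeanIntegrable μ ε (fun c s => F c s + k) c s where
  radius := hF.radius.add (integrableOn_const measure_ball_lt_top.ne)
  center := hF.center.add (integrableOn_const measure_ball_lt_top.ne)

variable [μ.IsOpenPosMeasure]

lemma meanOp_add_const (hαβ : α + β = 1) (hε : 0 < ε) (hF : MeanIntegrable μ ε F c s) (k : ℝ) :
    meanOp μ α β ε (fun c s => F c s + k) c s = meanOp μ α β ε F c s + k := by
  rw [meanOp, setAverage_add_const hF.radius (measure_ball_pos _ _ hε).ne' measure_ball_lt_top.ne,
    setAverage_add_const hF.center (measure_ball_pos _ _ hε).ne' measure_ball_lt_top.ne, meanOp]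
  linear_combination k * hαβ

/-- At a point where `F - G` comes close to its supremum, the strict inequality for `G` is
violated. -/
theorem le_of_le_meanOp_of_meanOp_add_le [OpensMeasurableSpace E] {D D' : Set (E × ℝ)} {δ : ℝ}
    (hα : 0 ≤ α) (hβ : 0 ≤ β) (hαβ : α + β = 1) (hε : 0 < ε) (hδ : 0 < δ)
    (hradius : ∀ c s, (c, s) ∈ D → ∀ t ∈ ball (0 : ℝ) ε, (c, s + t) ∈ D')
    (hcenter : ∀ c s, (c, s) ∈ D → ∀ h ∈ ball (0 : E) ε, (c + h, s) ∈ D')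
    (hFi : ∀ c s, (c, s) ∈ D → MeanIntegrable μ ε F c s)
    (hGi : ∀ c s, (c, s) ∈ D → MeanIntegrable μ ε G c s)
    (hF : ∀ c s, (c, s) ∈ D → F c s ≤ meanOp μ α β ε F c s)
    (hG : ∀ c s, (c, s) ∈ D → meanOp μ α β ε G c s + δ ≤ G c s)
    (hFG : ∀ c s, (c, s) ∈ D' \ D → F c s ≤ G c s)
    (hbdd : BddAbove ((fun p : E × ℝ => F p.1 p.2 - G p.1 p.2) '' D)) (hcs : (c, s) ∈ D) :
    F c s ≤ G c s := by
  by_contra! hlt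
  set K := sSup ((fun p : E × ℝ => F p.1 p.2 - G p.1 p.2) '' D)
  have sub_le_K : ∀ c s, (c, s) ∈ D → F c s - G c s ≤ K := fun c s h =>
    le_csSup hbdd (mem_image_of_mem _ h)
  have K_pos : 0 < K := (sub_pos.2 hlt).trans_le (sub_le_K c s hcs)
  have le_add_K : ∀ c s, (c, s) ∈ D' → F c s ≤ G c s + K := fun c s h' => by
    by_cases h : (c, s) ∈ D
    · linarith [sub_le_K c s h]
    · linarith [hFG c s ⟨h', h⟩]
  have sub_le_K_sub : ∀ c s, (c, s) ∈ D → F c s - G c s ≤ K - δ := fun c s h => by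
    have := calc F c s
      _ ≤ meanOp μ α β ε F c s := hF c s h
      _ ≤ meanOp μ α β ε (fun c s => G c s + K) c s :=
        meanOp_mono hα hβ (hFi c s h) ((hGi c s h).add_const K)
          (fun t ht => le_add_K _ _ (hradius c s h t ht))
          (fun w hw => le_add_K _ _ (hcenter c s h w hw))
      _ = meanOp μ α β ε G c s + K := meanOp_add_const hαβ hε (hGi c s h) K
    linarith [hG c s h]
  have : K ≤ K - δ := csSup_le ⟨_, mem_image_of_mem _ hcs⟩ <| by
    rintro _ ⟨⟨c, s⟩, h, rfl⟩
    exact sub_le_K_sub c s h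
  linarith

end MeanOperator

section DynamicProgramming

variable {E : Type*} [NormedAddCommGroup E] [MeasurableSpace E] {μ : Measure E} {α β ε s : ℝ}
  {v : E → ℝ} {c x y : E}

/-- The dynamic programming principle at `x`, at scale `ε`, with weight `α` on the extremal values
over balls of radius `t < ε` and weight `β` on the mean value with respect to `μ`. -/
def DPPAt (μ : Measure E) (α β ε : ℝ) (v : E → ℝ) (x : E) : Prop :=
  v x = α / (2 * ε) * (∫ t in (0 : ℝ)..ε, (sSup (v '' ball x t) + sInf (v '' ball x t)))
    + β * ⨍ z in ball x ε, v z ∂μ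

lemma DPPAt.congr [OpensMeasurableSpace E] {u : E → ℝ} (hε : 0 < ε) (huv : EqOn u v (ball x ε))
    (h : DPPAt μ α β ε u x) : DPPAt μ α β ε v x := by
  have himage : ∀ t ∈ Ioo 0 ε, sSup (u '' ball x t) + sInf (u '' ball x t)
      = sSup (v '' ball x t) + sInf (v '' ball x t) := fun t ht => by
    rw [(huv.mono (ball_subset_ball ht.2.le)).image_eq]
  rw [DPPAt, ← huv (mem_ball_self hε), h,
    intervalIntegral.integral_congr_Ioo_of_le hε.le himage,
    setAverage_congr_fun measurableSet_ball (.of_forall huv)]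

variable [BorelSpace E] [NormedSpace ℝ E] [FiniteDimensional ℝ E]

lemma meanIntegrable_ballOsc [IsFiniteMeasureOnCompacts μ] (hv : Bornology.IsBounded (range v))
    (c : E) (s : ℝ) : MeanIntegrable μ ε (ballOsc v) c s := by
  have hK (c : E) (s : ℝ) : ‖ballOsc v c s‖ ≤ diam (range v) :=
    (Real.norm_of_nonneg ballOsc_nonneg).trans_le (ballOsc_le_diam_range hv c s)
  have hcenter := (lowerSemicontinuous_ballOsc hv).comp (g := fun h => (c + h, s)) (by fun_prop)
  exact ⟨.of_bound measure_ball_lt_top ((monotone_ballOsc hv c).measurable.comp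
      (by fun_prop)).aestronglyMeasurable _ (.of_forall fun _ => hK _ _),
    .of_bound measure_ball_lt_top hcenter.measurable.aestronglyMeasurable _
      (.of_forall fun _ => hK _ _)⟩

variable [μ.IsAddHaarMeasure]

lemma setAverage_ball_sub_setAverage_ball_le (hvm : Measurable v)
    (hv : Bornology.IsBounded (range v)) (hx : x ∈ ball c s) (hy : y ∈ ball c s) :
    (⨍ z in ball x ε, v z ∂μ) - ⨍ z in ball y ε, v z ∂μ
      ≤ ⨍ h in ball (0 : E) ε, ballOsc v (c + h) s ∂μ := by
  have integrable_shift (z : E) : IntegrableOn (fun h => v (z + h)) (ball 0 ε) μ :=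
    integrableOn_ball_of_isBounded_range (hvm.comp (by fun_prop))
      (hv.subset (range_comp_subset_range _ v)) 0 ε
  rw [← setAverage_ball_zero_add μ v x, ← setAverage_ball_zero_add μ v y,
    ← setAverage_sub_s5 (integrable_shift x) (integrable_shift y)]
  refine setAverage_mono measurableSet_ball ((integrable_shift x).sub (integrable_shift y))
    (meanIntegrable_ballOsc hv c s).center fun h _ => sub_le_ballOsc hv ?_ ?_
  · simpa using hx
  · simpa using hy

theorem ballOsc_le_meanOp (hα : 0 ≤ α) (hβ : 0 ≤ β) (hε : 0 < ε) (hvm : Measurable v)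
    (hv : Bornology.IsBounded (range v)) (hdpp : ∀ x ∈ ball c s, DPPAt μ α β ε v x) :
    ballOsc v c s ≤ meanOp μ α β ε (ballOsc v) c s := by
  have hradius := setAverage_ball_zero_real hε (meanIntegrable_ballOsc (μ := μ) hv c s).radius
  simp only [← sub_eq_add_neg] at hradius
  have sub_le : ∀ x ∈ ball c s, ∀ y ∈ ball c s, v x - v y ≤ meanOp μ α β ε (ballOsc v) c s := by
    intro x hx y hy
    have hext := mul_le_mul_of_nonneg_left
      (integral_sSup_add_sInf_sub_le_integral_ballOsc hε.le hv hx hy)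
      (by positivity : 0 ≤ α / (2 * ε))
    have hmean := mul_le_mul_of_nonneg_left
      (setAverage_ball_sub_setAverage_ball_le (μ := μ) (ε := ε) hvm hv hx hy) hβ
    rw [meanOp, hradius, hdpp x hx, hdpp y hy]
    linear_combination hext + hmean
  exact ballOsc_le (meanOp_nonneg hα hβ fun _ _ => ballOsc_nonneg) fun x hx y hy =>
    abs_sub_le_iff.2 ⟨sub_le x hx y hy, sub_le y hy x hx⟩

end DynamicProgramming

section QuadraticAverages

variable {E : Type*} [NormedAddCommGroup E] [InnerProductSpace ℝ E] [FiniteDimensional ℝ E]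
  [MeasurableSpace E] [BorelSpace E] {μ : Measure E} [μ.IsAddHaarMeasure] {ρ : ℝ}

lemma setIntegral_ball_zero_inner (w : E) (ρ : ℝ) : ∫ h in ball (0 : E) ρ, inner ℝ w h ∂μ = 0 := by
  have h := (Measure.measurePreserving_neg μ).setIntegral_preimage_emb
    (Homeomorph.neg E).measurableEmbedding (fun h => inner ℝ w h) (ball 0 ρ)
  simp only [neg_preimage, neg_ball, neg_zero, inner_neg_right, integral_neg] at h
  linarith

lemma setAverage_ball_norm_add_sq (hρ : 0 < ρ) (w : E) :
    ⨍ h in ball (0 : E) ρ, ‖w + h‖ ^ 2 ∂μ = ‖w‖ ^ 2 + ⨍ h in ball (0 : E) ρ, ‖h‖ ^ 2 ∂μ := by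
  have hsq : IntegrableOn (fun h : E => ‖h‖ ^ 2) (ball 0 ρ) μ :=
    integrableOn_ball_of_continuous (by fun_prop) 0 ρ
  have hinner : IntegrableOn (fun h : E => 2 * inner ℝ w h) (ball 0 ρ) μ :=
    integrableOn_ball_of_continuous (by fun_prop) 0 ρ
  have expand (h : E) : ‖w + h‖ ^ 2 = 2 * inner ℝ w h + ‖h‖ ^ 2 + ‖w‖ ^ 2 := by
    rw [norm_add_sq_real]; ring
  simp only [expand]
  rw [setAverage_add_const (f := fun h => 2 * inner ℝ w h + ‖h‖ ^ 2) (hinner.add hsq)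
    (measure_ball_pos _ _ hρ).ne' measure_ball_lt_top.ne, setAverage_add hinner hsq,
    setAverage_const_mul, setAverage_eq, setIntegral_ball_zero_inner, smul_zero, mul_zero, zero_add,
    add_comm]

lemma setAverage_ball_norm_sq_le (hρ : 0 < ρ) :
    ⨍ h in ball (0 : E) ρ, ‖h‖ ^ 2 ∂μ ≤ ρ ^ 2 := by
  refine (setAverage_mono measurableSet_ball (integrableOn_ball_of_continuous (by fun_prop) 0 ρ)
    (integrableOn_const measure_ball_lt_top.ne) fun h hh => ?_).trans_eq
    (setAverage_const (measure_ball_pos _ _ hρ).ne' measure_ball_lt_top.ne (ρ ^ 2))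
  gcongr
  exact (mem_ball_zero_iff.1 hh).le

lemma setAverage_ball_sq (hρ : 0 < ρ) :
    ⨍ t in ball (0 : ℝ) ρ, ‖t‖ ^ 2 = ρ ^ 2 / 3 := by
  rw [setAverage_ball_zero_real hρ (integrableOn_ball_of_continuous (by fun_prop) 0 ρ)]
  simp only [norm_neg, Real.norm_eq_abs, sq_abs, ← two_mul, intervalIntegral.integral_const_mul,
    integral_pow]
  field_simp
  norm_num

lemma setAverage_ball_mul_norm_add_sq_add (hρ : 0 < ρ) (a k : ℝ) (w : E) :
    ⨍ h in ball (0 : E) ρ, (a * ‖w + h‖ ^ 2 + k) ∂μ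
      = a * ‖w‖ ^ 2 + k + a * ⨍ h in ball (0 : E) ρ, ‖h‖ ^ 2 ∂μ := by
  rw [setAverage_add_const (integrableOn_ball_of_continuous (by fun_prop) 0 ρ)
    (measure_ball_pos _ _ hρ).ne' measure_ball_lt_top.ne, setAverage_const_mul,
    setAverage_ball_norm_add_sq hρ]
  ring

end QuadraticAverages

section Barrier

variable {E : Type*} [SeminormedAddCommGroup E] {a d s₁ s₂ ε r s : ℝ} {v : E → ℝ} {c₀ c : E}

/-- The quadratic barrier for the oscillation over `ball c s`: convex in the centre `c`, concave in
the radius `s` and, at `c = c₀`, vanishing for `s = s₁` and `s = s₂`. -/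
noncomputable def barrier (a d s₁ s₂ : ℝ) (c₀ c : E) (s : ℝ) : ℝ :=
  a * ‖c - c₀‖ ^ 2 + d * ((s - s₁) * (s₂ - s))

lemma barrier_nonneg (ha : 0 ≤ a) (hd : 0 ≤ d) (h₁ : s₁ ≤ s) (h₂ : s ≤ s₂) :
    0 ≤ barrier a d s₁ s₂ c₀ c s :=
  add_nonneg (by positivity) (mul_nonneg hd (mul_nonneg (sub_nonneg.2 h₁) (sub_nonneg.2 h₂)))

lemma ballOsc_le_barrier_of_notMem (hε : 0 ≤ ε) (hεr : ε < r) (hv : Bornology.IsBounded (range v))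
    (ha : diam (range v) ≤ a * r ^ 2) (hd : diam (range v) ≤ d * r ^ 2)
    (hs : s ∈ Ioo (-ε) (r + ε)) (hcs : (c, s) ∉ ball c₀ r ×ˢ Ioo 0 r) :
    ballOsc v c s ≤ barrier a d (-ε) (3 * r) c₀ c s := by
  have hr : 0 < r := hε.trans_lt hεr
  have ha0 : 0 ≤ a := nonneg_of_mul_nonneg_left (diam_nonneg.trans ha) (pow_pos hr 2)
  have hd0 : 0 ≤ d := nonneg_of_mul_nonneg_left (diam_nonneg.trans hd) (pow_pos hr 2)
  rcases le_or_gt s 0 with hs0 | hs0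
  · exact (ballOsc_of_nonpos hs0).trans_le (barrier_nonneg ha0 hd0 hs.1.le (by linarith))
  refine (ballOsc_le_diam_range hv c s).trans ?_
  rcases lt_or_ge s r with hsr | hsr
  · have hc : r ≤ ‖c - c₀‖ := by
      by_contra! h
      exact hcs ⟨mem_ball_iff_norm.2 h, hs0, hsr⟩
    calc diam (range v)
      _ ≤ a * r ^ 2 := ha
      _ ≤ a * ‖c - c₀‖ ^ 2 := by gcongr
      _ ≤ barrier a d (-ε) (3 * r) c₀ c s :=
        le_add_of_nonneg_right (mul_nonneg hd0 (mul_nonneg (by linarith) (by linarith)))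
  · calc diam (range v)
      _ ≤ d * r ^ 2 := hd
      _ ≤ d * ((s - -ε) * (3 * r - s)) := by
        rw [sq]
        gcongr <;> linarith [hs.2]
      _ ≤ barrier a d (-ε) (3 * r) c₀ c s := le_add_of_nonneg_left (by positivity)

end Barrier

section Comparison

variable {E : Type*} [NormedAddCommGroup E] [InnerProductSpace ℝ E] [FiniteDimensional ℝ E]
  [MeasurableSpace E] [BorelSpace E] {μ : Measure E} [μ.IsAddHaarMeasure]
  {α β ε a d s₁ s₂ r s : ℝ} {v : E → ℝ} {c₀ c : E}

lemma meanIntegrable_barrier (c : E) (s : ℝ) : MeanIntegrable μ ε (barrier a d s₁ s₂ c₀) c s where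
  radius := integrableOn_ball_of_continuous (by unfold barrier; fun_prop) 0 ε
  center := integrableOn_ball_of_continuous (by unfold barrier; fun_prop) 0 ε

lemma meanOp_barrier_le (hβ : 0 ≤ β) (hαβ : α + β = 1) (hε : 0 < ε) (ha : 0 ≤ a) (c : E) (s : ℝ) :
    meanOp μ α β ε (barrier a d s₁ s₂ c₀) c s
      ≤ barrier a d s₁ s₂ c₀ c s + (β * a - α * d / 3) * ε ^ 2 := by
  have hradius : ⨍ t in ball (0 : ℝ) ε, barrier a d s₁ s₂ c₀ c (s + t)
      = barrier a d s₁ s₂ c₀ c s - d * (ε ^ 2 / 3) := by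
    have complete_square (t : ℝ) : barrier a d s₁ s₂ c₀ c (s + t)
        = -d * ‖s - (s₁ + s₂) / 2 + t‖ ^ 2 + (a * ‖c - c₀‖ ^ 2 + d * ((s₂ - s₁) / 2) ^ 2) := by
      rw [barrier, Real.norm_eq_abs, sq_abs]
      ring
    simp only [complete_square]
    rw [setAverage_ball_mul_norm_add_sq_add hε, setAverage_ball_sq hε, barrier, Real.norm_eq_abs,
      sq_abs]
    ring
  have hcenter : ⨍ h in ball (0 : E) ε, barrier a d s₁ s₂ c₀ (c + h) s ∂μ
      = barrier a d s₁ s₂ c₀ c s + a * ⨍ h in ball (0 : E) ε, ‖h‖ ^ 2 ∂μ := by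
    simp only [barrier, add_sub_right_comm c]
    exact setAverage_ball_mul_norm_add_sq_add hε _ _ _
  rw [meanOp, hradius, hcenter]
  linear_combination barrier a d s₁ s₂ c₀ c s * hαβ
    + β * a * setAverage_ball_norm_sq_le (μ := μ) hε

theorem ballOsc_le_barrier (hα : 0 ≤ α) (hβ : 0 ≤ β) (hαβ : α + β = 1) (hε : 0 < ε) (hεr : ε < r)
    (hvm : Measurable v) (hv : Bornology.IsBounded (range v)) (ha : diam (range v) ≤ a * r ^ 2)
    (hd : diam (range v) ≤ d * r ^ 2) (had : β * a < α * d / 3)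
    (hdpp : ∀ x ∈ ball c₀ (2 * r), DPPAt μ α β ε v x) (hcs : (c, s) ∈ ball c₀ r ×ˢ Ioo 0 r) :
    ballOsc v c s ≤ barrier a d (-ε) (3 * r) c₀ c s := by
  have hr : 0 < r := hε.trans hεr
  have ha0 : 0 ≤ a := nonneg_of_mul_nonneg_left (diam_nonneg.trans ha) (pow_pos hr 2)
  have hd0 : 0 ≤ d := nonneg_of_mul_nonneg_left (diam_nonneg.trans hd) (pow_pos hr 2)
  refine le_of_le_meanOp_of_meanOp_add_le (μ := μ) (D' := univ ×ˢ Ioo (-ε) (r + ε))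
    hα hβ hαβ hε (mul_pos (sub_pos.2 had) (pow_pos hε 2)) ?_ ?_
    (fun c s _ => meanIntegrable_ballOsc hv c s) (fun c s _ => meanIntegrable_barrier c s)
    ?_ ?_ ?_ ?_ hcs
  · rintro c s ⟨-, hs⟩ t ht
    rw [mem_ball_zero_iff, Real.norm_eq_abs, abs_lt] at ht
    exact ⟨mem_univ _, by linarith [hs.1], by linarith [hs.2]⟩
  · rintro c s ⟨-, hs⟩ h -
    exact ⟨mem_univ _, by linarith [hs.1], by linarith [hs.2]⟩
  · rintro c s ⟨hc, hs⟩
    refine ballOsc_le_meanOp hα hβ hε hvm hv fun x hx => hdpp x (ball_subset_ball' ?_ hx)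
    linarith [mem_ball.1 hc, hs.2]
  · intro c s _
    linear_combination meanOp_barrier_le (μ := μ) (d := d) (s₁ := -ε) (s₂ := 3 * r) (c₀ := c₀)
      hβ hαβ hε ha0 c s
  · rintro c s ⟨⟨-, hs⟩, hnot⟩
    exact ballOsc_le_barrier_of_notMem hε.le hεr hv ha hd hs hnot
  · refine ⟨diam (range v), ?_⟩
    rintro _ ⟨⟨c, s⟩, ⟨-, hs0, hsr⟩, rfl⟩
    have hbarrier : 0 ≤ barrier a d (-ε) (3 * r) c₀ c s :=
      barrier_nonneg ha0 hd0 (by linarith) (by linarith)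
    exact (sub_le_self _ hbarrier).trans (ballOsc_le_diam_range hv c s)

theorem ballOsc_le_mul_add {D : ℝ} (hα : 0 < α) (hβ : 0 ≤ β) (hαβ : α + β = 1)
    (hε : 0 < ε) (hεr : ε < r) (hvm : Measurable v) (hv : Bornology.IsBounded (range v))
    (hD : diam (range v) ≤ D) (hdpp : ∀ x ∈ ball c₀ (2 * r), DPPAt μ α β ε v x) (hs : 0 < s) :
    ballOsc v c₀ s ≤ 9 * (D + 1) / (α * r) * (s + ε) := by
  have hr : 0 < r := hε.trans hεr
  have hD0 : 0 ≤ D := diam_nonneg.trans hD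
  have hD_le : D ≤ 3 * (D + 1) / α :=
    (le_div_iff₀ hα).2 (by linarith [mul_le_of_le_one_right hD0 (by linarith : α ≤ 1)])
  rcases lt_or_ge s r with hsr | hsr
  · have ha : diam (range v) ≤ D / r ^ 2 * r ^ 2 := by
      rwa [div_mul_cancel₀ D (pow_pos hr 2).ne']
    have hd : diam (range v) ≤ 3 * (D + 1) / (α * r ^ 2) * r ^ 2 :=
      (hD.trans hD_le).trans_eq (by field_simp)
    have had : β * (D / r ^ 2) < α * (3 * (D + 1) / (α * r ^ 2)) / 3 :=
      calc β * (D / r ^ 2)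
        _ ≤ 1 * (D / r ^ 2) := by gcongr; linarith
        _ < (D + 1) / r ^ 2 := by rw [one_mul]; gcongr; linarith
        _ = α * (3 * (D + 1) / (α * r ^ 2)) / 3 := by field_simp
    calc ballOsc v c₀ s
      _ ≤ barrier (D / r ^ 2) (3 * (D + 1) / (α * r ^ 2)) (-ε) (3 * r) c₀ c₀ s :=
        ballOsc_le_barrier hα.le hβ hαβ hε hεr hvm hv ha hd had hdpp
          ⟨mem_ball_self hr, hs, hsr⟩
      _ = 3 * (D + 1) / (α * r ^ 2) * ((s + ε) * (3 * r - s)) := by simp [barrier]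
      _ ≤ 3 * (D + 1) / (α * r ^ 2) * ((s + ε) * (3 * r)) := by gcongr; linarith
      _ = 9 * (D + 1) / (α * r) * (s + ε) := by field_simp; norm_num
  · calc ballOsc v c₀ s
      _ ≤ D := (ballOsc_le_diam_range hv c₀ s).trans hD
      _ ≤ 9 * (D + 1) / (α * r) * r := by
        rw [div_mul_eq_div_div, div_mul_cancel₀ _ hr.ne']
        exact hD_le.trans (by gcongr; norm_num)
      _ ≤ 9 * (D + 1) / (α * r) * (s + ε) := by gcongr; linarith

end Comparison

section SmallScale

lemma integral_sub_integral_le_of_le_comp_add {f g : ℝ → ℝ} {d ε m M : ℝ} (hε : 0 ≤ ε) (hd : 0 ≤ d)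
    (hf : IntervalIntegrable f volume 0 ε) (hg : IntervalIntegrable g volume 0 (ε + d))
    (hfg : ∀ t ∈ Ioo 0 ε, f t ≤ g (t + d)) (hm : ∀ t ∈ Ioo 0 (ε + d), m ≤ g t)
    (hM : ∀ t ∈ Ioo 0 (ε + d), g t ≤ M) :
    (∫ t in (0 : ℝ)..ε, f t) - ∫ t in (0 : ℝ)..ε, g t ≤ d * (M - m) := by
  have subset_Icc {a b : ℝ} (ha : a ∈ Icc 0 (ε + d)) (hb : b ∈ Icc 0 (ε + d)) :
      IntervalIntegrable g volume a b :=
    hg.mono_set (uIcc_of_le (add_nonneg hε hd) ▸ uIcc_subset_Icc ha hb)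
  have h0 : 0 ∈ Icc 0 (ε + d) := ⟨le_rfl, by linarith⟩
  have hd' : d ∈ Icc 0 (ε + d) := ⟨hd, by linarith⟩
  have hε' : ε ∈ Icc 0 (ε + d) := ⟨hε, by linarith⟩
  have hεd : ε + d ∈ Icc 0 (ε + d) := ⟨by linarith, le_rfl⟩
  have hshift : ∫ t in (0 : ℝ)..ε, f t ≤ ∫ t in d..(ε + d), g t := by
    have := intervalIntegral.integral_mono_on_of_le_Ioo hε hf
      (by simpa using (subset_Icc hd' hεd).comp_add_right d) hfg
    rwa [intervalIntegral.integral_comp_add_right, zero_add] at this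
  have htop : ∫ t in ε..(ε + d), g t ≤ d * M := by
    have := intervalIntegral.integral_mono_on_of_le_Ioo (by linarith) (subset_Icc hε' hεd)
      (intervalIntegrable_const (c := M)) fun t ht => hM t ⟨hε.trans_lt ht.1, ht.2⟩
    simpa using this
  have hbot : d * m ≤ ∫ t in (0 : ℝ)..d, g t := by
    have := intervalIntegral.integral_mono_on_of_le_Ioo hd (intervalIntegrable_const (c := m))
      (subset_Icc h0 hd') fun t ht => hm t ⟨ht.1, by linarith [ht.2]⟩
    simpa using this
  have hcomm := intervalIntegral.integral_interval_sub_interval_comm (subset_Icc hd' hεd)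
    (subset_Icc h0 hε') (subset_Icc hd' h0)
  rw [intervalIntegral.integral_symm 0 d, intervalIntegral.integral_symm ε (ε + d)] at hcomm
  linear_combination hshift + hcomm + htop + hbot

lemma one_add_pow_le_one_add_mul {q : ℝ} (hq0 : 0 ≤ q) (hq1 : q ≤ 1) (n : ℕ) :
    (1 + q) ^ n ≤ 1 + (2 ^ n - 1) * q := by
  have h := (convexOn_pow n).2 (mem_Ici.2 zero_le_one) (mem_Ici.2 zero_le_two)
    (sub_nonneg.2 hq1) hq0 (sub_add_cancel 1 q)
  simp only [smul_eq_mul, one_pow] at h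
  calc (1 + q) ^ n
    _ = ((1 - q) * 1 + q * 2) ^ n := by ring
    _ ≤ (1 - q) * 1 + q * 2 ^ n := h
    _ = 1 + (2 ^ n - 1) * q := by ring

lemma setIntegral_sub_setIntegral_le {X : Type*} [MeasurableSpace X] {μ : Measure X} {A B : Set X}
    {f : X → ℝ} {m M : ℝ} (hA : MeasurableSet A) (hB : MeasurableSet B) (hAB : μ A = μ B)
    (hAtop : μ A ≠ ⊤) (hfA : IntegrableOn f A μ) (hfB : IntegrableOn f B μ)
    (hM : ∀ x ∈ A, f x ≤ M) (hm : ∀ x ∈ B, m ≤ f x) :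
    (∫ x in A, f x ∂μ) - ∫ x in B, f x ∂μ ≤ (M - m) * μ.real (A \ B) := by
  have hBtop : μ B ≠ ⊤ := hAB ▸ hAtop
  have hsdiff : μ.real (A \ B) = μ.real (B \ A) :=
    congrArg ENNReal.toReal (measure_sdiff_symm hA.nullMeasurableSet hB.nullMeasurableSet hAB
      (measure_ne_top_of_subset inter_subset_left hAtop))
  have hle : ∫ x in A \ B, f x ∂μ ≤ M * μ.real (A \ B) := by
    rw [mul_comm, ← smul_eq_mul, ← setIntegral_const]
    exact setIntegral_mono_on (hfA.mono_set sdiff_subset)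
      (integrableOn_const (measure_ne_top_of_subset sdiff_subset hAtop)) (hA.diff hB)
      fun x hx => hM x hx.1
  have hge : m * μ.real (B \ A) ≤ ∫ x in B \ A, f x ∂μ := by
    rw [mul_comm, ← smul_eq_mul, ← setIntegral_const]
    exact setIntegral_mono_on (integrableOn_const (measure_ne_top_of_subset sdiff_subset hBtop))
      (hfB.mono_set sdiff_subset) (hB.diff hA) fun x hx => hm x hx.1
  rw [← integral_inter_add_sdiff hB hfA, ← integral_inter_add_sdiff hA hfB, inter_comm B A]
  rw [← hsdiff] at hge
  linear_combination hle + hge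

lemma integral_sSup_sub_integral_sSup_le_dist {X : Type*} [PseudoMetricSpace X] {v : X → ℝ}
    {x y : X} {ε : ℝ} (hε : 0 ≤ ε) (hv : Bornology.IsBounded (range v)) :
    (∫ t in (0 : ℝ)..ε, sSup (v '' ball x t)) - ∫ t in (0 : ℝ)..ε, sSup (v '' ball y t)
      ≤ dist x y * ballOsc v y (ε + dist x y) := by
  set d := dist x y
  have hd : 0 ≤ d := dist_nonneg
  have hv' (z : X) (t : ℝ) : Bornology.IsBounded (v '' ball z t) :=
    hv.subset (image_subset_range _ _)
  rw [ballOsc, Real.diam_eq (hv' y _)]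
  refine integral_sub_integral_le_of_le_comp_add hε hd (intervalIntegrable_sSup_image_ball_s5 hv x hε)
    (intervalIntegrable_sSup_image_ball_s5 hv y (by positivity)) (fun t ht => ?_) (fun t ht => ?_)
    fun t ht => ?_
  · exact csSup_le_csSup (hv' y _).bddAbove ((nonempty_ball.2 ht.1).image v)
      (image_mono (ball_subset_ball' le_rfl))
  · have hy : v y ∈ v '' ball y t := mem_image_of_mem v (mem_ball_self ht.1)
    exact (csInf_le (hv' y _).bddBelow (image_mono (ball_subset_ball ht.2.le) hy)).trans
      (le_csSup (hv' y t).bddAbove hy)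
  · exact csSup_le_csSup (hv' y _).bddAbove ((nonempty_ball.2 ht.1).image v)
      (image_mono (ball_subset_ball ht.2.le))

lemma integral_sInf_sub_integral_sInf_le_dist {X : Type*} [PseudoMetricSpace X] {v : X → ℝ}
    {x y : X} {ε : ℝ} (hε : 0 ≤ ε) (hv : Bornology.IsBounded (range v)) :
    (∫ t in (0 : ℝ)..ε, sInf (v '' ball x t)) - ∫ t in (0 : ℝ)..ε, sInf (v '' ball y t)
      ≤ dist x y * ballOsc v x (ε + dist x y) := by
  have h := integral_sSup_sub_integral_sSup_le_dist (x := y) (y := x) hε (isBounded_range_neg hv)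
  simp only [neg_image_eq_neg, Real.sSup_neg, intervalIntegral.integral_neg, ballOsc_neg,
    dist_comm y x] at h
  linear_combination h

variable {E : Type*} [NormedAddCommGroup E] [NormedSpace ℝ E] [FiniteDimensional ℝ E]
  [MeasurableSpace E] [BorelSpace E] {μ : Measure E} [μ.IsAddHaarMeasure] {v : E → ℝ} {x y : E}
  {ε : ℝ}

lemma measureReal_ball_sdiff_ball_le (hε : 0 < ε) (hxy : dist x y ≤ ε) :
    μ.real (ball x ε \ ball y ε)
      ≤ (2 ^ Module.finrank ℝ E - 1) * (dist x y / ε) * μ.real (ball y ε) := by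
  have hd : 0 < ε + dist x y := by positivity
  have ball_scale : μ.real (ball y (ε + dist x y))
      = (1 + dist x y / ε) ^ Module.finrank ℝ E * μ.real (ball y ε) := by
    simp only [measureReal_def, Measure.addHaar_ball_of_pos μ y hd,
      Measure.addHaar_ball_of_pos μ y hε, ENNReal.toReal_mul,
      ENNReal.toReal_ofReal (pow_pos hd _).le, ENNReal.toReal_ofReal (pow_pos hε _).le]
    rw [← mul_assoc, ← mul_pow, add_mul, one_mul, div_mul_cancel₀ _ hε.ne']
  calc μ.real (ball x ε \ ball y ε)
    _ ≤ μ.real (ball y (ε + dist x y) \ ball y ε) :=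
      measureReal_mono (sdiff_subset_sdiff_left (ball_subset_ball' le_rfl))
        (measure_ne_top_of_subset sdiff_subset measure_ball_lt_top.ne)
    _ = μ.real (ball y (ε + dist x y)) - μ.real (ball y ε) :=
      measureReal_sdiff (ball_subset_ball (le_add_of_nonneg_right dist_nonneg)) measurableSet_ball
        measure_ball_lt_top.ne
    _ = ((1 + dist x y / ε) ^ Module.finrank ℝ E - 1) * μ.real (ball y ε) := by
      rw [ball_scale, sub_one_mul]
    _ ≤ _ := by
      gcongr
      exact sub_le_iff_le_add'.2 (one_add_pow_le_one_add_mul (by positivity)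
        ((div_le_one hε).2 hxy) _)

lemma setAverage_ball_sub_setAverage_ball_le_dist (hε : 0 < ε) (hvm : Measurable v)
    (hv : Bornology.IsBounded (range v)) (hxy : dist x y ≤ ε) :
    (⨍ z in ball x ε, v z ∂μ) - ⨍ z in ball y ε, v z ∂μ
      ≤ (2 ^ Module.finrank ℝ E - 1) * (dist x y / ε) * ballOsc v y (2 * ε) := by
  have hball : μ (ball x ε) = μ (ball y ε) := by
    rw [Measure.addHaar_ball_center μ x, Measure.addHaar_ball_center μ y]
  have hpos : 0 < μ.real (ball y ε) :=
    ENNReal.toReal_pos (measure_ball_pos _ _ hε).ne' measure_ball_lt_top.ne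
  have hv' (z : E) : Bornology.IsBounded (v '' ball z ε) := hv.subset (image_subset_range _ _)
  have hosc : sSup (v '' ball x ε) - sInf (v '' ball y ε) ≤ ballOsc v y (2 * ε) :=
    csSup_sub_csInf_le_diam ((nonempty_ball.2 hε).image v) ((nonempty_ball.2 hε).image v)
      (image_mono (ball_subset_ball' (by linarith))) (image_mono (ball_subset_ball (by linarith)))
      (hv.subset (image_subset_range _ _))
  have hdiff := setIntegral_sub_setIntegral_le measurableSet_ball measurableSet_ball hball
    measure_ball_lt_top.ne (integrableOn_ball_of_isBounded_range hvm hv x ε)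
    (integrableOn_ball_of_isBounded_range hvm hv y ε)
    (fun z hz => le_csSup (hv' x).bddAbove (mem_image_of_mem v hz))
    (fun z hz => csInf_le (hv' y).bddBelow (mem_image_of_mem v hz))
  rw [setAverage_eq, setAverage_eq, measureReal_def μ (ball x ε), hball, ← measureReal_def,
    ← smul_sub, smul_eq_mul, inv_mul_le_iff₀ hpos]
  calc (∫ z in ball x ε, v z ∂μ) - ∫ z in ball y ε, v z ∂μ
    _ ≤ (sSup (v '' ball x ε) - sInf (v '' ball y ε)) * μ.real (ball x ε \ ball y ε) := hdiff
    _ ≤ ballOsc v y (2 * ε) * μ.real (ball x ε \ ball y ε) := by gcongr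
    _ ≤ ballOsc v y (2 * ε)
        * ((2 ^ Module.finrank ℝ E - 1) * (dist x y / ε) * μ.real (ball y ε)) :=
      mul_le_mul_of_nonneg_left (measureReal_ball_sdiff_ball_le hε hxy) ballOsc_nonneg
    _ = _ := by ring

theorem DPPAt.sub_le_mul_dist {α β K : ℝ} (hα : 0 ≤ α) (hβ : 0 ≤ β) (hαβ : α + β = 1)
    (hε : 0 < ε) (hvm : Measurable v) (hv : Bornology.IsBounded (range v)) (hxy : dist x y ≤ ε)
    (hx : DPPAt μ α β ε v x) (hy : DPPAt μ α β ε v y) (hKx : ballOsc v x (2 * ε) ≤ K * ε)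
    (hKy : ballOsc v y (2 * ε) ≤ K * ε) :
    v x - v y ≤ 2 ^ Module.finrank ℝ E * K * dist x y := by
  have hK : 0 ≤ K := nonneg_of_mul_nonneg_left (ballOsc_nonneg.trans hKx) hε
  have hN : (1 : ℝ) ≤ 2 ^ Module.finrank ℝ E := one_le_pow₀ one_le_two
  have hext : (∫ t in (0 : ℝ)..ε, (sSup (v '' ball x t) + sInf (v '' ball x t)))
      - ∫ t in (0 : ℝ)..ε, (sSup (v '' ball y t) + sInf (v '' ball y t))
        ≤ 2 * ε * (K * dist x y) := by
    have hosc {z : E} (hz : ballOsc v z (2 * ε) ≤ K * ε) : ballOsc v z (ε + dist x y) ≤ K * ε :=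
      (monotone_ballOsc hv z (by linarith)).trans hz
    have hsup := (integral_sSup_sub_integral_sSup_le_dist (x := x) hε.le hv).trans
      (mul_le_mul_of_nonneg_left (hosc hKy) dist_nonneg)
    have hinf := (integral_sInf_sub_integral_sInf_le_dist (y := y) hε.le hv).trans
      (mul_le_mul_of_nonneg_left (hosc hKx) dist_nonneg)
    simp only [intervalIntegral.integral_add (intervalIntegrable_sSup_image_ball_s5 hv _ hε.le)
      (intervalIntegrable_sInf_image_ball_s5 hv _ hε.le)]
    linear_combination hsup + hinf
  have hmean : (⨍ z in ball x ε, v z ∂μ) - ⨍ z in ball y ε, v z ∂μ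
      ≤ (2 ^ Module.finrank ℝ E - 1) * (K * dist x y) :=
    calc (⨍ z in ball x ε, v z ∂μ) - ⨍ z in ball y ε, v z ∂μ
      _ ≤ (2 ^ Module.finrank ℝ E - 1) * (dist x y / ε) * ballOsc v y (2 * ε) :=
        setAverage_ball_sub_setAverage_ball_le_dist hε hvm hv hxy
      _ ≤ (2 ^ Module.finrank ℝ E - 1) * (dist x y / ε) * (K * ε) := by
        gcongr
      _ = (2 ^ Module.finrank ℝ E - 1) * (K * dist x y) := by field_simp
  have hαε : α / (2 * ε) * (2 * ε) = α := div_mul_cancel₀ α (by positivity)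
  rw [DPPAt] at hx hy
  calc v x - v y
    _ ≤ α * (K * dist x y) + β * ((2 ^ Module.finrank ℝ E - 1) * (K * dist x y)) := by
      linear_combination hx - hy + α / (2 * ε) * hext + β * hmean + K * dist x y * hαε
    _ ≤ 1 * (K * dist x y) + 1 * ((2 ^ Module.finrank ℝ E - 1) * (K * dist x y)) := by
      gcongr <;> linarith
    _ = 2 ^ Module.finrank ℝ E * K * dist x y := by ring

end SmallScale

section Lipschitz

variable {E : Type*} [NormedAddCommGroup E] [InnerProductSpace ℝ E] [FiniteDimensional ℝ E]
  [MeasurableSpace E] [BorelSpace E] {μ : Measure E} [μ.IsAddHaarMeasure]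
  {α β ε r : ℝ} {v : E → ℝ} {x y : E}

theorem sub_le_mul_dist_of_dppAt {D : ℝ} (hα : 0 < α) (hβ : 0 ≤ β) (hαβ : α + β = 1)
    (hε : 0 < ε) (hεr : ε < r) (hvm : Measurable v) (hv : Bornology.IsBounded (range v))
    (hD : diam (range v) ≤ D) (hx : ∀ z ∈ ball x (2 * r), DPPAt μ α β ε v z)
    (hy : ∀ z ∈ ball y (2 * r), DPPAt μ α β ε v z) :
    v x - v y ≤ 2 ^ Module.finrank ℝ E * (27 * (D + 1) / (α * r)) * dist x y := by
  set K := 27 * (D + 1) / (α * r) with hK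
  have hr : 0 < r := hε.trans hεr
  have hK0 : 0 ≤ K := by
    have := diam_nonneg.trans hD
    positivity
  have hosc {z : E} (hz : ∀ w ∈ ball z (2 * r), DPPAt μ α β ε v w) {s : ℝ} (hs : 0 < s) :
      ballOsc v z s ≤ K * ((s + ε) / 3) :=
    (ballOsc_le_mul_add hα hβ hαβ hε hεr hvm hv hD hz hs).trans_eq (by rw [hK]; ring)
  rcases le_or_gt (dist x y) ε with hxy | hxy
  · have hosc_two {z : E} (hz : ∀ w ∈ ball z (2 * r), DPPAt μ α β ε v w) :
        ballOsc v z (2 * ε) ≤ K * ε := (hosc hz (by positivity)).trans_eq (by ring)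
    exact (hx x (mem_ball_self (by positivity))).sub_le_mul_dist hα.le hβ hαβ hε hvm hv hxy
      (hy y (mem_ball_self (by positivity))) (hosc_two hx) (hosc_two hy)
  · calc v x - v y
      _ ≤ ballOsc v y (dist x y + ε) :=
        sub_le_ballOsc hv (mem_ball.2 (by linarith)) (mem_ball_self (by positivity))
      _ ≤ K * ((dist x y + ε + ε) / 3) := hosc hy (by positivity)
      _ ≤ K * dist x y := by gcongr; linarith
      _ ≤ 2 ^ Module.finrank ℝ E * K * dist x y := by
        gcongr
        exact le_mul_of_one_le_left hK0 (one_le_pow₀ one_le_two)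

theorem uniform_lipschitz_estimate_general {u : E → ℝ} {M : ℝ} {z₀ : E} (hα : 0 < α) (hβ : 0 ≤ β)
    (hαβ : α + β = 1) (hε : 0 < ε) (hεr : ε < r) (hum : Measurable u)
    (hu : ∀ x ∈ ball z₀ (5 * r), |u x| ≤ M) (hdpp : ∀ x ∈ ball z₀ (4 * r), DPPAt μ α β ε u x)
    (hx : x ∈ ball z₀ (2 * r)) (hy : y ∈ ball z₀ (2 * r)) :
    |u x - u y| ≤ 2 ^ Module.finrank ℝ E * (27 * (2 * M + 1) / (α * r)) * dist x y := by
  have hball : ball z₀ (2 * r) ⊆ ball z₀ (5 * r) := ball_subset_ball (by linarith)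
  have hM : 0 ≤ M := (abs_nonneg _).trans (hu x (hball hx))
  -- Cutting off makes `u` globally bounded without affecting the dynamic programming principle.
  set v := (ball z₀ (5 * r)).indicator u with hv
  have huv : EqOn u v (ball z₀ (5 * r)) := fun z hz => (indicator_of_mem hz u).symm
  have hrange : range v ⊆ closedBall 0 M := range_subset_iff.2 fun z => by
    rw [mem_closedBall_zero_iff, Real.norm_eq_abs]
    by_cases hz : z ∈ ball z₀ (5 * r)
    · exact huv hz ▸ hu z hz
    · rwa [hv, indicator_of_notMem hz, abs_zero]
  have hdiam : diam (range v) ≤ 2 * M :=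
    (diam_mono hrange isBounded_closedBall).trans (diam_closedBall hM)
  have hdpp' {w : E} (hw : w ∈ ball z₀ (2 * r)) : ∀ z ∈ ball w (2 * r), DPPAt μ α β ε v z := by
    intro z hz
    have hz' : z ∈ ball z₀ (4 * r) := ball_subset_ball' (by linarith [mem_ball.1 hw]) hz
    refine (hdpp z hz').congr hε (huv.mono (ball_subset_ball' ?_))
    linarith [mem_ball.1 hz']
  have sub_le {x y : E} (hx : x ∈ ball z₀ (2 * r)) (hy : y ∈ ball z₀ (2 * r)) :
      v x - v y ≤ 2 ^ Module.finrank ℝ E * (27 * (2 * M + 1) / (α * r)) * dist x y :=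
    sub_le_mul_dist_of_dppAt hα hβ hαβ hε hεr (hum.indicator measurableSet_ball)
      (isBounded_closedBall.subset hrange) hdiam (hdpp' hx) (hdpp' hy)
  rw [huv (hball hx), huv (hball hy)]
  exact abs_sub_le_iff.2 ⟨sub_le hx hy, dist_comm x y ▸ sub_le hy hx⟩

end Lipschitz

/-- **Uniform Lipschitz estimate (Theorem 3.2, first part).** For every `p > 2`, integer
`n ≥ 2`, `r > 0` and `M ≥ 0` there exists `C > 0` depending only on `p, n, r, M` such that:
whenever `ε ∈ (0,1)` with `ε < r` and `u` is a bounded Borel function on `Ω_ε` with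
`sup_{Ω_ε}|u| ≤ M` satisfying the DPP at every point of `Ω`, then for every `z₀` with
`B_{5r}(z₀) ⊆ Ω` and all `x, y ∈ B_{2r}(z₀)`: `|u(x) − u(y)| ≤ C|x − y|`. -/
theorem uniform_lipschitz_estimate (n : ℕ) (hn : 2 ≤ n) (p r M : ℝ)
    (hp : 2 < p) (hr : 0 < r) (hM : 0 ≤ M) :
    ∃ C : ℝ, 0 < C ∧
      ∀ (Ω : Set (EuclideanSpace ℝ (Fin n))),
        IsOpen Ω → IsConnected Ω → Bornology.IsBounded Ω →
      ∀ ε : ℝ, ε ∈ Set.Ioo (0 : ℝ) 1 → ε < r →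
      ∀ u : EuclideanSpace ℝ (Fin n) → ℝ,
        Measurable u →
        (∀ x ∈ Ω ∪ {x | x ∉ Ω ∧ Metric.infDist x (frontier Ω) ≤ ε}, |u x| ≤ M) →
        (∀ x ∈ Ω, u x =
          ((p - 2) / (n + p)) / (2 * ε) *
              (∫ t in (0 : ℝ)..ε, (sSup (u '' Metric.ball x t) + sInf (u '' Metric.ball x t)))
            + ((n + 2) / (n + p)) * ⨍ z in Metric.ball x ε, u z) →
      ∀ z₀ : EuclideanSpace ℝ (Fin n), Metric.ball z₀ (5 * r) ⊆ Ω →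
      ∀ x ∈ Metric.ball z₀ (2 * r), ∀ y ∈ Metric.ball z₀ (2 * r),
        |u x - u y| ≤ C * dist x y := by
  have hn0 : (0 : ℝ) < n := by exact_mod_cast (by omega : 0 < n)
  have hα : 0 < (p - 2) / (n + p) := by apply div_pos <;> linarith
  have hβ : 0 ≤ ((n : ℝ) + 2) / (n + p) := by positivity
  have hαβ : (p - 2) / (n + p) + ((n : ℝ) + 2) / (n + p) = 1 := by
    rw [← add_div, div_eq_one_iff_eq (by positivity)]
    ring
  refine ⟨2 ^ n * (27 * (2 * M + 1) / ((p - 2) / (n + p) * r)), by positivity, ?_⟩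
  intro Ω _ _ _ ε hε hεr u hum huM hdpp z₀ hball x hx y hy
  have := uniform_lipschitz_estimate_general hα hβ hαβ hε.1 hεr hum
    (fun x hx => huM x (.inl (hball hx)))
    (fun x hx => hdpp x (hball (ball_subset_ball (by linarith) hx))) hx hy
  rwa [finrank_euclideanSpace_fin] at this
end
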